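/- arXiv:1807.02884 — 2 statements merged into one kernel-verified Lean document; each statement's English description precedes it below -/
import Mathlib

section
/- Suppose α > β > 0 and I(α,β) < 1. Then the maximum-likelihood estimator fails with high probability: p_fail = 1 − o(1) as n → ∞. -/
open Finset Filter Matrix

open scoped Classical

/-- The `k`-element subsets of `[n]`, i.e. the potential hyperedges. -/
abbrev KSet (n k : ℕ) := {e : Finset (Fin n) // e.card = k}

/-- A `±1` label vector (encoded by `Bool`) is balanced if it has equally many
`+1`'s (`true`) and `-1`'s (`false`). -/
abbrev balanced {n : ℕ} (σ : Fin n → Bool) : Prop :=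
  2 * (Finset.univ.filter (fun i => σ i = true)).card = n

/-- `e` is in-cluster w.r.t. `σ`: `σ` is constant on `e`. -/
abbrev inCluster {n : ℕ} (σ : Fin n → Bool) (e : Finset (Fin n)) : Prop :=
  ∀ i ∈ e, ∀ j ∈ e, σ i = σ j

/-- Probability that `e` appears as an edge, given the labels `σ`. -/
noncomputable def edgeP {n : ℕ} (p q : ℝ) (σ : Fin n → Bool) (e : Finset (Fin n)) : ℝ :=
  if inCluster σ e then p else q

/-- Probability of observing exactly the hypergraph with edge-indicator `E`, given labels `σ`
(edges appear independently). -/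
noncomputable def hypProb {n k : ℕ} (p q : ℝ) (σ : Fin n → Bool) (E : KSet n k → Bool) : ℝ :=
  ∏ e : KSet n k, if E e then edgeP p q σ e.1 else 1 - edgeP p q σ e.1

/-- Uniform prior on balanced label vectors. -/
noncomputable def sigProb (n : ℕ) (σ : Fin n → Bool) : ℝ :=
  if balanced σ then 1 / ((Finset.univ.filter (fun τ : Fin n → Bool => balanced τ)).card : ℝ)
  else 0

/-- Probability of an event `P` under the joint law `HSBM(n,p,q;k)` of `(σ, ℋ)`. -/
noncomputable def prEvent (n k : ℕ) (p q : ℝ)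
    (P : (Fin n → Bool) → (KSet n k → Bool) → Prop) : ℝ :=
  ∑ σ : Fin n → Bool, ∑ E : KSet n k → Bool,
    sigProb n σ * hypProb p q σ E * (if P σ E then 1 else 0)

/-- Global sign flip. -/
def negB {n : ℕ} (σ : Fin n → Bool) : Fin n → Bool := fun i => !(σ i)

/-- The edge probability parameter `α · log n / C(n-1, k-1)`. -/
noncomputable def pParam (k : ℕ) (α : ℝ) (n : ℕ) : ℝ :=
  α * Real.log n / ((n - 1).choose (k - 1) : ℝ)

/-- `est` is a maximum-likelihood estimator: for every observed hypergraph it returns a balanced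
label vector maximizing the likelihood over all balanced label vectors. -/
def isMLE {n k : ℕ} (p q : ℝ) (est : (KSet n k → Bool) → (Fin n → Bool)) : Prop :=
  ∀ E : KSet n k → Bool, balanced (est E) ∧
    ∀ x : Fin n → Bool, balanced x → hypProb p q x E ≤ hypProb p q (est E) E

/-!
Set aside `s ~ 2m / log (2m)` vertices of each label, forming `S`. For `i ∈ S`, consider only the
hyperedges at `i` whose other vertices lie outside `S` and share a label. These stars are disjoint
for different `i`, so the events that `i` has exactly `a ≈ γ log (2m)` open hyperedges to its own
cluster and exactly `b ≈ (γ + δ) log (2m)` to the opposite one are independent. The hyperedges at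
`i` meeting `S` again are too few to matter: with high probability, every `i ∈ S` has fewer than
`b - a` open ones. Hence swapping the labels of two such vertices with opposite labels puts more
open hyperedges in-cluster, and since `p > q` this strictly increases the likelihood.

Binomial probabilities at scale `log (2m)` are governed by the Poisson rate, and the rate of the
above event is minimized over `γ` (with `δ → 0`) at the geometric mean of the two means, where it
equals `I(α, β)`. So each of the `(2m) ^ (1 - o(1))` candidates is good with probability at least
`(2m) ^ (-R)` for some `R < 1`, and both labels contain a good vertex with high probability.
-/

section BernoulliProduct

open MeasureTheory ProbabilityTheory

lemma dependsOn_mem_biInter {ι κ : Type*} {A : κ → Set (ι → Bool)} {T : κ → Finset ι}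
    {s : Finset κ} (hA : ∀ i ∈ s, DependsOn (· ∈ A i) (T i : Set ι)) :
    DependsOn (· ∈ ⋂ i ∈ s, A i) (s.biUnion T : Set ι) := by
  intro E F hEF
  simp only [Set.mem_iInter]
  refine propext (forall₂_congr fun i hi => iff_of_eq (hA i hi fun e he => hEF e ?_))
  exact mem_coe.2 (mem_biUnion.2 ⟨i, hi, he⟩)

variable {ι : Type*} [Fintype ι]

/-- The law of a random subset of `ι`, encoded by its indicator, that contains each `e`
independently with probability `w e`. -/
noncomputable def bernoulliPi (w : ι → unitInterval) : Measure (ι → Bool) :=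
  Measure.pi fun e => bernoulliMeasure true false (w e)

/-- The number of elements of `T` that are open, i.e. belong to the subset with indicator `E`. -/
def openCount (T : Finset ι) (E : ι → Bool) : ℕ := #{e ∈ T | E e = true}

variable (w : ι → unitInterval)

instance : IsProbabilityMeasure (bernoulliPi w) := by
  unfold bernoulliPi; infer_instance

lemma bernoulliPi_real_pi (s : ι → Set Bool) :
    (bernoulliPi w).real (Set.univ.pi s) = ∏ e, (bernoulliMeasure true false (w e)).real (s e) := by
  simp only [bernoulliPi, measureReal_def, Measure.pi_pi, ENNReal.toReal_prod]

lemma bernoulliPi_real_singleton (E : ι → Bool) :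
    (bernoulliPi w).real {E} = ∏ e, if E e then (w e : ℝ) else 1 - w e := by
  rw [← Set.univ_pi_singleton, bernoulliPi_real_pi]
  refine prod_congr rfl fun e _ => ?_
  cases h : E e <;> simp

lemma iIndepFun_bernoulliPi : iIndepFun (fun e (E : ι → Bool) => E e) (bernoulliPi w) :=
  iIndepFun_pi (X := fun _ b => b) fun _ => aemeasurable_id

lemma bernoulliPi_real_inter {A B : Set (ι → Bool)} {S T : Finset ι} (hST : Disjoint S T)
    (hA : DependsOn (· ∈ A) (S : Set ι)) (hB : DependsOn (· ∈ B) (T : Set ι)) :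
    (bernoulliPi w).real (A ∩ B) = (bernoulliPi w).real A * (bernoulliPi w).real B := by
  obtain ⟨f, hf⟩ := dependsOn_iff_exists_comp.1 hA
  obtain ⟨g, hg⟩ := dependsOn_iff_exists_comp.1 hB
  have restr_indep := (iIndepFun_bernoulliPi w).indepFun_finset S T hST fun _ => .of_discrete
  have hA' : A = (fun (E : ι → Bool) (e : S) => E e) ⁻¹' {z | f z} :=
    Set.ext fun E => iff_of_eq (congrFun hf E)
  have hB' : B = (fun (E : ι → Bool) (e : T) => E e) ⁻¹' {z | g z} :=
    Set.ext fun E => iff_of_eq (congrFun hg E)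
  rw [hA', hB']
  simpa only [measureReal_def, ENNReal.toReal_mul] using congrArg ENNReal.toReal
    (restr_indep.measure_inter_preimage_eq_mul _ _ .of_discrete .of_discrete)

lemma bernoulliPi_real_biInter {κ : Type*} {A : κ → Set (ι → Bool)} {T : κ → Finset ι}
    {s : Finset κ} (hT : (s : Set κ).PairwiseDisjoint T)
    (hA : ∀ i ∈ s, DependsOn (· ∈ A i) (T i : Set ι)) :
    (bernoulliPi w).real (⋂ i ∈ s, A i) = ∏ i ∈ s, (bernoulliPi w).real (A i) := by
  induction s using Finset.induction_on with
  | empty => simp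
  | insert i s hi ih =>
    rw [coe_insert, Set.pairwiseDisjoint_insert_of_notMem (mem_coe.not.2 hi)] at hT
    have hAs : ∀ j ∈ s, DependsOn (· ∈ A j) (T j : Set ι) := fun j hj =>
      hA j (mem_insert_of_mem hj)
    rw [set_biInter_insert, prod_insert hi, ← ih hT.1 hAs]
    exact bernoulliPi_real_inter w ((disjoint_biUnion_right _ _ _).2 hT.2)
      (hA i (mem_insert_self i s)) (dependsOn_mem_biInter hAs)

lemma mgf_indicator_bernoulliPi (e : ι) (t : ℝ) :
    mgf (fun E : ι → Bool => if E e = true then (1 : ℝ) else 0) (bernoulliPi w) t =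
      w e * Real.exp t + (1 - w e) := by
  have eval_law : (bernoulliPi w).map (fun E => E e) = bernoulliMeasure true false (w e) :=
    (measurePreserving_eval (fun e => bernoulliMeasure true false (w e)) e).map_eq
  calc mgf (fun E : ι → Bool => if E e = true then (1 : ℝ) else 0) (bernoulliPi w) t
      = ∫ b, Real.exp (t * if b = true then 1 else 0) ∂(bernoulliPi w).map (fun E => E e) := by
        rw [integral_map .of_discrete .of_discrete]
        rfl
    _ = w e * Real.exp t + (1 - w e) := by
        rw [eval_law, integral_bernoulliMeasure]
        simp

variable {w}

lemma bernoulliPi_real_filter_eq {T U : Finset ι} (hU : U ⊆ T) {p : unitInterval}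
    (hw : ∀ e ∈ T, w e = p) :
    (bernoulliPi w).real {E | {e ∈ T | E e = true} = U} = p ^ #U * (1 - p) ^ (#T - #U) := by
  have box : {E : ι → Bool | {e ∈ T | E e = true} = U} =
      Set.univ.pi fun e => if e ∈ T then {decide (e ∈ U)} else Set.univ := by
    ext E
    simp only [Set.mem_ofPred_eq, Finset.ext_iff, mem_filter, Set.mem_univ_pi]
    refine forall_congr' fun e => ?_
    by_cases he : e ∈ T
    · cases hE : E e <;> simp [he]
    · simpa [he] using fun h => he (hU h)
  have marginal : ∀ e ∈ T, (bernoulliMeasure true false (w e)).real {decide (e ∈ U)} =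
      if e ∈ U then (p : ℝ) else 1 - p := by
    intro e he
    by_cases heU : e ∈ U <;> simp [heU, hw e he]
  rw [box, bernoulliPi_real_pi]
  simp only [apply_ite (Measure.real _), probReal_univ, prod_ite_mem, univ_inter]
  rw [prod_congr rfl marginal, prod_ite, prod_const, prod_const, filter_mem_eq_inter,
    inter_eq_right.2 hU, filter_notMem_eq_sdiff, card_sdiff_of_subset hU]

lemma bernoulliPi_real_openCount_eq {T : Finset ι} {p : unitInterval} (hw : ∀ e ∈ T, w e = p)
    (a : ℕ) :
    (bernoulliPi w).real {E | openCount T E = a} = (binomial #T p).real {a} := by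
  have partition : {E : ι → Bool | openCount T E = a} =
      ⋃ U ∈ T.powersetCard a, {E | {e ∈ T | E e = true} = U} := by
    ext E
    simp [openCount, mem_powersetCard]
  rw [partition, measureReal_biUnion_finset _ fun _ _ => .of_discrete, binomial_real_singleton,
    sum_congr rfl fun U hU => ?_, sum_const, card_powersetCard, nsmul_eq_mul, mul_assoc]
  · rw [bernoulliPi_real_filter_eq (mem_powersetCard.1 hU).1 hw, (mem_powersetCard.1 hU).2]
  · exact fun U _ V _ hUV => Set.disjoint_left.2 fun E hE hE' => hUV (hE.symm.trans hE')

lemma mgf_openCount_bernoulliPi_le {T : Finset ι} {p : unitInterval} (hw : ∀ e ∈ T, w e ≤ p)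
    (t : ℝ) :
    mgf (fun E => (openCount T E : ℝ)) (bernoulliPi w) t ≤ Real.exp (#T * (p * Real.exp t)) := by
  have sum_indicators : (fun E : ι → Bool => (openCount T E : ℝ)) =
      ∑ e ∈ T, fun E => if E e = true then (1 : ℝ) else 0 := by
    ext E
    simp [openCount]
  have indep : iIndepFun (fun e (E : ι → Bool) => if E e = true then (1 : ℝ) else 0)
      (bernoulliPi w) :=
    (iIndepFun_bernoulliPi w).comp (fun _ b => if b = true then (1 : ℝ) else 0)
      fun _ => .of_discrete
  rw [sum_indicators, indep.mgf_sum fun _ => .of_discrete]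
  refine (prod_le_prod (fun _ _ => mgf_nonneg) fun e he => ?_).trans_eq
    (by rw [prod_const, ← Real.exp_nat_mul] : ∏ _e ∈ T, Real.exp (p * Real.exp t) = _)
  have hwe : (w e : ℝ) ≤ p := hw e he
  calc mgf (fun E : ι → Bool => if E e = true then (1 : ℝ) else 0) (bernoulliPi w) t
      = w e * Real.exp t + (1 - w e) := mgf_indicator_bernoulliPi w e t
    _ ≤ p * Real.exp t + 1 := by
        gcongr
        linarith [(w e).2.1]
    _ ≤ Real.exp (p * Real.exp t) := Real.add_one_le_exp _

lemma bernoulliPi_real_le_openCount_le {T : Finset ι} {p : unitInterval} (hw : ∀ e ∈ T, w e ≤ p)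
    {t : ℝ} (ht : 0 ≤ t) (x : ℕ) :
    (bernoulliPi w).real {E | x ≤ openCount T E} ≤
      Real.exp (-(t * x) + #T * (p * Real.exp t)) := by
  have chernoff := measure_ge_le_exp_mul_mgf (μ := bernoulliPi w)
    (X := fun E => (openCount T E : ℝ)) x ht .of_finite
  rw [Real.exp_add, ← neg_mul]
  simp only [Nat.cast_le] at chernoff
  exact chernoff.trans (by gcongr; exact mgf_openCount_bernoulliPi_le hw t)

end BernoulliProduct

section Likelihood

variable {n k : ℕ}

/-- The potential hyperedges that are in-cluster with respect to `σ`. -/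
def clusterEdges (k : ℕ) (σ : Fin n → Bool) : Finset (KSet n k) := {e | inCluster σ e.1}

lemma balanced_comp_perm {σ : Fin n → Bool} (hσ : balanced σ) (π : Equiv.Perm (Fin n)) :
    balanced (σ ∘ π) := by
  have : #{i | (σ ∘ π) i = true} = #{i | σ i = true} :=
    card_equiv π fun i => by simp
  exact (congrArg (2 * ·) this).trans hσ

lemma card_filter_eq_of_balanced {m : ℕ} {σ : Fin (2 * m) → Bool} (hσ : balanced σ) (c : Bool) :
    #{i | σ i = c} = m := by
  have total := card_filter_add_card_filter_not (s := univ) (fun i => σ i = true)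
  simp only [Bool.not_eq_true, card_univ, Fintype.card_fin] at total
  cases c <;> omega

lemma exists_card_filter_eq {m s : ℕ} (hs : s ≤ m) {σ : Fin (2 * m) → Bool} (hσ : balanced σ) :
    ∃ S : Finset (Fin (2 * m)), ∀ c, #{i ∈ S | σ i = c} = s ∧ #{l | l ∉ S ∧ σ l = c} = m - s := by
  choose U hU hUs using fun c =>
    exists_subset_card_eq (hs.trans_eq (card_filter_eq_of_balanced hσ c).symm)
  have inside (c : Bool) : {i ∈ univ.biUnion U | σ i = c} = U c := by
    ext i
    simp only [mem_filter, mem_biUnion, mem_univ, true_and]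
    refine ⟨?_, fun hi => ⟨⟨c, hi⟩, (mem_filter.1 (hU c hi)).2⟩⟩
    rintro ⟨⟨d, hd⟩, rfl⟩
    rwa [(mem_filter.1 (hU d hd)).2]
  refine ⟨univ.biUnion U, fun c => ⟨(congrArg card (inside c)).trans (hUs c), ?_⟩⟩
  have outside : ({l | l ∉ univ.biUnion U ∧ σ l = c} : Finset (Fin (2 * m))) =
      ({l | σ l = c} : Finset (Fin (2 * m))) \ U c := by
    rw [← inside c]
    grind
  rw [outside, card_sdiff_of_subset (hU c), card_filter_eq_of_balanced hσ, hUs]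

lemma exists_balanced (m : ℕ) : ∃ σ : Fin (2 * m) → Bool, balanced σ := by
  obtain ⟨U, -, hU⟩ := exists_subset_card_eq (s := (univ : Finset (Fin (2 * m)))) (n := m)
    (by simp; omega)
  exact ⟨fun i => decide (i ∈ U), by simp [balanced, hU]⟩

lemma card_clusterEdges_comp_perm (σ : Fin n → Bool) (π : Equiv.Perm (Fin n)) :
    #(clusterEdges k (σ ∘ π)) = #(clusterEdges k σ) := by
  refine card_equiv (π.finsetCongr.subtypeEquiv fun e => by simp) fun e => ?_
  simp only [clusterEdges, mem_filter, mem_univ, true_and, Equiv.subtypeEquiv_apply,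
    Equiv.finsetCongr_apply, inCluster, forall_mem_map]
  rfl

lemma inCluster_negB (σ : Fin n → Bool) (e : Finset (Fin n)) :
    inCluster (negB σ) e ↔ inCluster σ e := by
  simp [inCluster, negB]

lemma hypProb_negB (p q : ℝ) (σ : Fin n → Bool) (E : KSet n k → Bool) :
    hypProb p q (negB σ) E = hypProb p q σ E := by
  simp only [hypProb, edgeP, inCluster_negB]

lemma hypProb_eq_mul_pow {p q : ℝ} (hq : 0 < q) (hq1 : q < 1) (hp1 : p < 1)
    (σ : Fin n → Bool) (E : KSet n k → Bool) :
    hypProb p q σ E = (∏ e, if E e then q else 1 - q) *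
      ((1 - p) / (1 - q)) ^ #(clusterEdges k σ) *
      (p * (1 - q) / (q * (1 - p))) ^ openCount (clusterEdges k σ) E := by
  have hq1' : 1 - q ≠ 0 := by linarith
  have hp1' : 1 - p ≠ 0 := by linarith
  have factor (e : KSet n k) : (if E e then edgeP p q σ e.1 else 1 - edgeP p q σ e.1) =
      (if E e then q else 1 - q) * (if e ∈ clusterEdges k σ then (1 - p) / (1 - q) else 1) *
        (if e ∈ {e ∈ clusterEdges k σ | E e = true} then p * (1 - q) / (q * (1 - p)) else 1) := by
    have edge : edgeP p q σ e.1 = if e ∈ clusterEdges k σ then p else q := by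
      simp [edgeP, clusterEdges]
    rw [edge]
    by_cases he : e ∈ clusterEdges k σ <;> cases hE : E e <;> simp [he, hE] <;> field_simp
  simp only [hypProb, factor, prod_mul_distrib, prod_ite_mem, univ_inter, prod_const, openCount]

lemma hypProb_lt_hypProb {p q : ℝ} (hq : 0 < q) (hqp : q < p) (hp1 : p < 1)
    {σ τ : Fin n → Bool} (hcard : #(clusterEdges k σ) = #(clusterEdges k τ)) {E : KSet n k → Bool}
    (hopen : openCount (clusterEdges k σ) E < openCount (clusterEdges k τ) E) :
    hypProb p q σ E < hypProb p q τ E := by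
  have hq1 : 0 < 1 - q := by linarith
  have : 0 < 1 - p := by linarith
  have odds_ratio : 1 < p * (1 - q) / (q * (1 - p)) := by
    rw [one_lt_div (by positivity)]
    linarith
  rw [hypProb_eq_mul_pow hq (hqp.trans hp1) hp1, hypProb_eq_mul_pow hq (hqp.trans hp1) hp1, hcard]
  gcongr

lemma isMLE.ne_and_ne_negB {p q : ℝ} {est : (KSet n k → Bool) → Fin n → Bool}
    (hest : isMLE p q est) {E : KSet n k → Bool} {σ τ : Fin n → Bool} (hτ : balanced τ)
    (hlt : hypProb p q σ E < hypProb p q τ E) : est E ≠ σ ∧ est E ≠ negB σ := by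
  constructor <;> intro h <;> have hle := (hest E).2 τ hτ <;> rw [h] at hle
  · exact hle.not_gt hlt
  · exact (hle.trans_eq (hypProb_negB p q σ E)).not_gt hlt

end Likelihood

section Swap

variable {n k : ℕ}

/-- The potential hyperedges at `i` all of whose other vertices lie outside `S` and have
label `c`. -/
def monoStar (k : ℕ) (σ : Fin n → Bool) (S : Finset (Fin n)) (i : Fin n) (c : Bool) :
    Finset (KSet n k) :=
  {e | i ∈ e.1 ∧ ∀ l ∈ e.1, l ≠ i → l ∉ S ∧ σ l = c}

/-- The potential hyperedges at `i` that contain another vertex of `S`. -/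
def innerEdges (k : ℕ) (S : Finset (Fin n)) (i : Fin n) : Finset (KSet n k) :=
  {e | i ∈ e.1 ∧ ∃ l ∈ e.1, l ≠ i ∧ l ∈ S}

lemma card_kset_between {U V : Finset (Fin n)} (hUV : Disjoint U V) (hU : #U ≤ k) :
    #{e : KSet n k | U ⊆ e.1 ∧ e.1 ⊆ U ∪ V} = (#V).choose (k - #U) := by
  rw [← card_powersetCard]
  refine card_bij' (fun e _ => e.1 \ U) (fun A hA => ⟨U ∪ A, ?_⟩) ?_ ?_ ?_ ?_
  · obtain ⟨hAV, hA⟩ := mem_powersetCard.1 hA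
    rw [card_union_of_disjoint (hUV.mono_right hAV), hA, Nat.add_sub_cancel' hU]
  · intro e he
    obtain ⟨hUe, heUV⟩ := (mem_filter.1 he).2
    exact mem_powersetCard.2 ⟨sdiff_le_iff.2 heUV, by rw [card_sdiff_of_subset hUe, e.2]⟩
  · intro A hA
    exact mem_filter.2 ⟨mem_univ _, subset_union_left,
      union_subset_union_right (mem_powersetCard.1 hA).1⟩
  · intro e he
    exact Subtype.ext (union_sdiff_of_subset (mem_filter.1 he).2.1)
  · intro A hA
    exact union_sdiff_cancel_left (hUV.mono_right (mem_powersetCard.1 hA).1)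

lemma card_monoStar (hk : 1 ≤ k) (σ : Fin n → Bool) {S : Finset (Fin n)} {i : Fin n} (hi : i ∈ S)
    (c : Bool) : #(monoStar k σ S i c) = (#{l | l ∉ S ∧ σ l = c}).choose (k - 1) := by
  rw [← card_singleton i, ← card_kset_between (by simp [hi]) (by simpa using hk)]
  congr 1
  ext e
  simp [monoStar, subset_iff, or_iff_not_imp_left]

lemma card_innerEdges_le (hk : 2 ≤ k) (S : Finset (Fin n)) (i : Fin n) :
    #(innerEdges k S i) ≤ #S * (n - 2).choose (k - 2) := by
  have cover : innerEdges k S i ⊆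
      (S.erase i).biUnion fun l => {e | {i, l} ⊆ e.1 ∧ e.1 ⊆ {i, l} ∪ {i, l}ᶜ} := by
    intro e he
    obtain ⟨hie, l, hle, hli, hlS⟩ := (mem_filter.1 he).2
    refine mem_biUnion.2 ⟨l, mem_erase.2 ⟨hli, hlS⟩, mem_filter.2 ⟨mem_univ _, ?_, ?_⟩⟩
    · exact insert_subset hie (singleton_subset_iff.2 hle)
    · rw [union_compl]
      exact subset_univ _
  refine (card_le_card cover).trans <| (card_biUnion_le_card_mul _ _ _ fun l hl => ?_).trans
    (Nat.mul_le_mul_right _ (card_erase_le))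
  have hil : #({i, l} : Finset (Fin n)) = 2 := card_pair (ne_of_mem_erase hl).symm
  rw [card_kset_between disjoint_compl_right (hil.trans_le hk), card_compl, hil, Fintype.card_fin]

lemma monoStar_subset_clusterEdges_swap (hk : 2 ≤ k) {σ : Fin n → Bool} {S : Finset (Fin n)}
    {i j : Fin n} (hj : j ∈ S) (hij : σ j = !σ i) :
    monoStar k σ S i (!σ i) ⊆ clusterEdges k (σ ∘ Equiv.swap i j) \ clusterEdges k σ := by
  intro e he
  obtain ⟨hie, hrest⟩ := (mem_filter.1 he).2
  have hne : j ≠ i := by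
    rintro rfl
    simp at hij
  have swapped : ∀ l ∈ e.1, σ (Equiv.swap i j l) = !σ i := by
    intro l hl
    rcases eq_or_ne l i with rfl | hli
    · rw [Equiv.swap_apply_left, hij]
    · have hlj : l ≠ j := by
        rintro rfl
        exact (hrest l hl hne).1 hj
      rw [Equiv.swap_apply_of_ne_of_ne hli hlj, (hrest l hl hli).2]
  obtain ⟨l, hl, hli⟩ := exists_mem_ne (by rw [e.2]; exact hk) i
  simp only [clusterEdges, Finset.mem_sdiff, mem_filter, mem_univ, true_and]
  exact ⟨fun a ha b hb => (swapped a ha).trans (swapped b hb).symm,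
    fun h => by simpa [(hrest l hl hli).2] using h l hl i hie⟩

lemma mem_monoStar_or_innerEdges {σ : Fin n → Bool} (S : Finset (Fin n)) {i : Fin n}
    {e : KSet n k} (hi : i ∈ e.1) (he : inCluster σ e.1) :
    e ∈ monoStar k σ S i (σ i) ∪ innerEdges k S i := by
  simp only [monoStar, innerEdges, mem_union, mem_filter, mem_univ, true_and, hi]
  by_cases h : ∃ l ∈ e.1, l ≠ i ∧ l ∈ S
  · exact .inr h
  · exact .inl fun l hl hli => ⟨fun hlS => h ⟨l, hl, hli, hlS⟩, he l hl i hi⟩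

lemma clusterEdges_sdiff_swap_subset (σ : Fin n → Bool) (S : Finset (Fin n)) (i j : Fin n) :
    clusterEdges k σ \ clusterEdges k (σ ∘ Equiv.swap i j) ⊆
      (monoStar k σ S i (σ i) ∪ innerEdges k S i) ∪
        (monoStar k σ S j (σ j) ∪ innerEdges k S j) := by
  intro e he
  simp only [clusterEdges, Finset.mem_sdiff, mem_filter, mem_univ, true_and] at he
  rw [mem_union]
  by_cases hi : i ∈ e.1
  · exact .inl (mem_monoStar_or_innerEdges S hi he.1)
  by_cases hj : j ∈ e.1
  · exact .inr (mem_monoStar_or_innerEdges S hj he.1)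
  have fixed : ∀ l ∈ e.1, σ (Equiv.swap i j l) = σ l := fun l hl => by
    rw [Equiv.swap_apply_of_ne_of_ne (ne_of_mem_of_not_mem hl hi) (ne_of_mem_of_not_mem hl hj)]
  exact absurd (fun a ha b hb => ((fixed a ha).trans (he.1 a ha b hb)).trans (fixed b hb).symm) he.2

lemma disjoint_monoStar (hk : 2 ≤ k) (σ : Fin n → Bool) {S : Finset (Fin n)} {i j : Fin n}
    (hi : i ∈ S) (hj : j ∈ S) {c d : Bool} (hne : (i, c) ≠ (j, d)) :
    Disjoint (monoStar k σ S i c) (monoStar k σ S j d) := by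
  refine Finset.disjoint_left.2 fun e hei hej => hne ?_
  obtain ⟨hie, hi_rest⟩ := (mem_filter.1 hei).2
  obtain ⟨hje, hj_rest⟩ := (mem_filter.1 hej).2
  obtain rfl : i = j := by
    by_contra h
    exact (hj_rest i hie h).1 hi
  obtain ⟨l, hl, hli⟩ := exists_mem_ne (by rw [e.2]; exact hk) i
  rw [← (hi_rest l hl hli).2, (hj_rest l hl hli).2]

lemma openCount_mono {ι : Type*} {S T : Finset ι} (h : S ⊆ T) (E : ι → Bool) :
    openCount S E ≤ openCount T E :=
  card_le_card (filter_subset_filter _ h)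

lemma openCount_union_le {ι : Type*} [DecidableEq ι] (S T : Finset ι) (E : ι → Bool) :
    openCount (S ∪ T) E ≤ openCount S E + openCount T E := by
  rw [openCount, filter_union]
  exact card_union_le _ _

lemma openCount_union_of_disjoint {ι : Type*} [DecidableEq ι] {S T : Finset ι}
    (h : Disjoint S T) (E : ι → Bool) : openCount (S ∪ T) E = openCount S E + openCount T E := by
  rw [openCount, filter_union]
  exact card_union_of_disjoint (disjoint_filter_filter h)

lemma openCount_sdiff_lt_openCount_sdiff_iff {ι : Type*} [DecidableEq ι] {S T : Finset ι}
    {E : ι → Bool} :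
    openCount (S \ T) E < openCount (T \ S) E ↔ openCount S E < openCount T E := by
  have filter_sdiff (A B : Finset ι) :
      {e ∈ A \ B | E e = true} = {e ∈ A | E e = true} \ {e ∈ B | E e = true} := by grind
  simp only [openCount, filter_sdiff, card_sdiff_lt_card_sdiff_iff]

/-- The configurations in which `i` has exactly `a` open hyperedges to its own cluster and exactly
`b` open hyperedges to the opposite one, among those whose other vertices avoid `S`. -/
def starEvent (k : ℕ) (σ : Fin n → Bool) (S : Finset (Fin n)) (a b : ℕ) (i : Fin n) :
    Set (KSet n k → Bool) :=
  {E | openCount (monoStar k σ S i (σ i)) E = a ∧ openCount (monoStar k σ S i (!σ i)) E = b}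

lemma openCount_clusterEdges_lt_swap (hk : 2 ≤ k) {σ : Fin n → Bool} {S : Finset (Fin n)}
    {i j : Fin n} (hi : i ∈ S) (hj : j ∈ S) (hij : σ j = !σ i) {a b x : ℕ} (hab : a + x ≤ b)
    {E : KSet n k → Bool} (hEi : E ∈ starEvent k σ S a b i) (hEj : E ∈ starEvent k σ S a b j)
    (hxi : openCount (innerEdges k S i) E < x) (hxj : openCount (innerEdges k S j) E < x) :
    openCount (clusterEdges k σ) E < openCount (clusterEdges k (σ ∘ Equiv.swap i j)) E := by
  have hne : i ≠ j := by
    rintro rfl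
    simp at hij
  have hji : σ i = !σ j := by simp [hij]
  have loss : openCount (clusterEdges k σ \ clusterEdges k (σ ∘ Equiv.swap i j)) E <
      (a + x) + (a + x) := by
    refine (openCount_mono (clusterEdges_sdiff_swap_subset σ S i j) E).trans_lt ?_
    refine (openCount_union_le _ _ E).trans_lt (add_lt_add ?_ ?_) <;>
      refine (openCount_union_le _ _ E).trans_lt (add_lt_add_of_le_of_lt ?_ ‹_›)
    exacts [hEi.1.le, hEj.1.le]
  have gain : b + b ≤ openCount (clusterEdges k (σ ∘ Equiv.swap i j) \ clusterEdges k σ) E := by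
    nth_rw 1 [← hEi.2]
    rw [← hEj.2, ← openCount_union_of_disjoint (disjoint_monoStar hk σ hi hj (by simp [hne]))]
    refine openCount_mono (union_subset (monoStar_subset_clusterEdges_swap hk hj hij) ?_) E
    rw [Equiv.swap_comm]
    exact monoStar_subset_clusterEdges_swap hk hi hji
  exact openCount_sdiff_lt_openCount_sdiff_iff.1 (by omega)

end Swap

section FailureProbability

open MeasureTheory ProbabilityTheory

variable {n k : ℕ}

/-- The conditional law of the hypergraph in `HSBM(n,p,q;k)` given the labels `σ`. -/
noncomputable def hsbmMeasure (k : ℕ) (p q : unitInterval) (σ : Fin n → Bool) :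
    Measure (KSet n k → Bool) :=
  bernoulliPi fun e => if inCluster σ e.1 then p else q

variable (p q : unitInterval) (σ : Fin n → Bool)

instance : IsProbabilityMeasure (hsbmMeasure k p q σ) := by
  unfold hsbmMeasure; infer_instance

lemma hsbmMeasure_real_singleton (E : KSet n k → Bool) :
    (hsbmMeasure k p q σ).real {E} = hypProb p q σ E := by
  simp only [hsbmMeasure, bernoulliPi_real_singleton, hypProb, edgeP, apply_ite Subtype.val]

lemma prEvent_eq_sum_sigProb_mul (P : (Fin n → Bool) → (KSet n k → Bool) → Prop) :
    prEvent n k p q P = ∑ σ, sigProb n σ * (hsbmMeasure k p q σ).real {E | P σ E} := by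
  refine sum_congr rfl fun σ _ => ?_
  have event_sum : (hsbmMeasure k p q σ).real {E | P σ E} =
      ∑ E with P σ E, hypProb p q σ E := by
    simp only [← hsbmMeasure_real_singleton, sum_measureReal_singleton, coe_filter_univ]
  rw [event_sum, sum_filter, mul_sum]
  refine sum_congr rfl fun E _ => ?_
  split_ifs <;> simp

lemma sum_sigProb {σ₀ : Fin n → Bool} (hσ₀ : balanced σ₀) : ∑ σ, sigProb n σ = 1 := by
  have : (#{σ : Fin n → Bool | balanced σ} : ℝ) ≠ 0 :=
    Nat.cast_ne_zero.2 (card_ne_zero_of_mem (mem_filter.2 ⟨mem_univ σ₀, hσ₀⟩))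
  simp only [sigProb, ← sum_filter, sum_const, nsmul_eq_mul]
  exact mul_one_div_cancel this

lemma le_prEvent {m : ℕ} {c : ℝ} {P : (Fin (2 * m) → Bool) → (KSet (2 * m) k → Bool) → Prop}
    (hc : ∀ σ, balanced σ → c ≤ (hsbmMeasure k p q σ).real {E | P σ E}) :
    c ≤ prEvent (2 * m) k p q P := by
  obtain ⟨σ₀, hσ₀⟩ := exists_balanced m
  rw [prEvent_eq_sum_sigProb_mul, ← one_mul c, ← sum_sigProb hσ₀, sum_mul]
  refine sum_le_sum fun σ _ => ?_
  by_cases hσ : balanced σ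
  · exact mul_le_mul_of_nonneg_left (hc σ hσ) (by unfold sigProb; positivity)
  · simp [sigProb, hσ]

lemma prEvent_le_one {m : ℕ} (P : (Fin (2 * m) → Bool) → (KSet (2 * m) k → Bool) → Prop) :
    prEvent (2 * m) k p q P ≤ 1 := by
  obtain ⟨σ₀, hσ₀⟩ := exists_balanced m
  rw [prEvent_eq_sum_sigProb_mul, ← sum_sigProb hσ₀]
  exact sum_le_sum fun σ _ =>
    mul_le_of_le_one_right (by unfold sigProb; positivity) measureReal_le_one

variable {p q σ}

lemma inCluster_iff_of_mem_monoStar (hk : 2 ≤ k) {S : Finset (Fin n)} {i : Fin n} {c : Bool}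
    {e : KSet n k} (he : e ∈ monoStar k σ S i c) : inCluster σ e.1 ↔ c = σ i := by
  obtain ⟨hie, hrest⟩ := (mem_filter.1 he).2
  obtain ⟨l, hl, hli⟩ := exists_mem_ne (by rw [e.2]; exact hk) i
  refine ⟨fun h => (hrest l hl hli).2.symm.trans (h l hl i hie), fun hc => ?_⟩
  have label_eq : ∀ a ∈ e.1, σ a = σ i := fun a ha => by
    rcases eq_or_ne a i with rfl | hai
    exacts [rfl, (hrest a ha hai).2.trans hc]
  exact fun a ha b hb => (label_eq a ha).trans (label_eq b hb).symm

lemma dependsOn_openCount {ι β : Type*} (T : Finset ι) (f : ℕ → β) :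
    DependsOn (fun E : ι → Bool => f (openCount T E)) (T : Set ι) := fun E F hEF =>
  congrArg f (congrArg card (filter_congr fun e he => by rw [hEF e he]))

lemma dependsOn_starEvent (σ : Fin n → Bool) (S : Finset (Fin n)) (a b : ℕ) (i : Fin n) :
    DependsOn (· ∈ starEvent k σ S a b i)
      (monoStar k σ S i (σ i) ∪ monoStar k σ S i (!σ i) : Set (KSet n k)) := fun _ _ hEF =>
  congrArg₂ And
    (dependsOn_openCount _ (· = a) fun e he => hEF e (.inl he))
    (dependsOn_openCount _ (· = b) fun e he => hEF e (.inr he))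

variable {S : Finset (Fin n)} {r : ℕ}

lemma hsbmMeasure_real_starEvent (hk : 2 ≤ k) (hr : ∀ c, #{l | l ∉ S ∧ σ l = c} = r) {i : Fin n}
    (hi : i ∈ S) (a b : ℕ) :
    (hsbmMeasure k p q σ).real (starEvent k σ S a b i) =
      (binomial (r.choose (k - 1)) p).real {a} * (binomial (r.choose (k - 1)) q).real {b} := by
  have card_star (c : Bool) : #(monoStar k σ S i c) = r.choose (k - 1) := by
    rw [card_monoStar (by omega) σ hi, hr]
  have own : (hsbmMeasure k p q σ).real {E | openCount (monoStar k σ S i (σ i)) E = a} =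
      (binomial (r.choose (k - 1)) p).real {a} := by
    rw [hsbmMeasure, bernoulliPi_real_openCount_eq, card_star]
    exact fun e he => if_pos ((inCluster_iff_of_mem_monoStar hk he).2 rfl)
  have opposite : (hsbmMeasure k p q σ).real {E | openCount (monoStar k σ S i (!σ i)) E = b} =
      (binomial (r.choose (k - 1)) q).real {b} := by
    rw [hsbmMeasure, bernoulliPi_real_openCount_eq, card_star]
    exact fun e he => if_neg ((inCluster_iff_of_mem_monoStar hk he).not.2 (by simp))
  rw [← own, ← opposite]
  exact bernoulliPi_real_inter _ (disjoint_monoStar hk σ hi hi (by simp))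
    (dependsOn_openCount _ (· = a)) (dependsOn_openCount _ (· = b))

lemma hsbmMeasure_real_forall_notMem_starEvent_le (hk : 2 ≤ k)
    (hr : ∀ c, #{l | l ∉ S ∧ σ l = c} = r) {U : Finset (Fin n)} (hU : U ⊆ S) (a b : ℕ) :
    (hsbmMeasure k p q σ).real {E | ∀ i ∈ U, E ∉ starEvent k σ S a b i} ≤
      Real.exp (-(#U * ((binomial (r.choose (k - 1)) p).real {a} *
        (binomial (r.choose (k - 1)) q).real {b}))) := by
  have as_iInter : {E | ∀ i ∈ U, E ∉ starEvent k σ S a b i} =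
      ⋂ i ∈ U, (starEvent k σ S a b i)ᶜ := by
    ext E
    simp
  have stars_disjoint : (U : Set (Fin n)).PairwiseDisjoint fun i =>
      monoStar k σ S i (σ i) ∪ monoStar k σ S i (!σ i) := by
    intro i hi j hj hij
    have star_disjoint (c d : Bool) : Disjoint (monoStar k σ S i c) (monoStar k σ S j d) :=
      disjoint_monoStar hk σ (hU hi) (hU hj) (by simp [hij])
    simp only [Function.onFun, disjoint_union_left, disjoint_union_right, star_disjoint, and_self]
  rw [as_iInter, hsbmMeasure, bernoulliPi_real_biInter _ stars_disjoint, ← hsbmMeasure, ← mul_neg,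
    Real.exp_nat_mul, ← prod_const]
  · refine prod_le_prod (fun _ _ => measureReal_nonneg) fun i hi => ?_
    rw [probReal_compl_eq_one_sub .of_discrete, hsbmMeasure_real_starEvent hk hr (hU hi)]
    exact Real.one_sub_le_exp_neg _
  · intro i _
    rw [coe_union]
    exact fun E F hEF => congrArg Not (dependsOn_starEvent σ S a b i hEF)

lemma hsbmMeasure_real_le_openCount_innerEdges (hk : 2 ≤ k) (hqp : q ≤ p) (S : Finset (Fin n))
    (i : Fin n) (x : ℕ) {t : ℝ} (ht : 0 ≤ t) :
    (hsbmMeasure k p q σ).real {E | x ≤ openCount (innerEdges k S i) E} ≤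
      Real.exp (-(t * x) + (#S * (n - 2).choose (k - 2)) * (p * Real.exp t)) := by
  refine (bernoulliPi_real_le_openCount_le (p := p) (fun e _ => ?_) ht x).trans ?_
  · split_ifs <;> simp [hqp]
  · have hp := p.2.1
    gcongr
    exact_mod_cast card_innerEdges_le hk S i

lemma mle_fails_of_mem_starEvent (hk : 2 ≤ k) (hq : (0 : ℝ) < q) (hqp : q < p) (hp : (p : ℝ) < 1)
    {est : (KSet n k → Bool) → Fin n → Bool} (hest : isMLE p q est) (hσ : balanced σ)
    {a b x : ℕ} (hab : a + x ≤ b) {E : KSet n k → Bool}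
    (hgood : ∀ c, ∃ i ∈ S, σ i = c ∧ E ∈ starEvent k σ S a b i)
    (hinner : ∀ i ∈ S, openCount (innerEdges k S i) E < x) : est E ≠ σ ∧ est E ≠ negB σ := by
  obtain ⟨i, hi, hic, hEi⟩ := hgood true
  obtain ⟨j, hj, hjc, hEj⟩ := hgood false
  exact hest.ne_and_ne_negB (balanced_comp_perm hσ (Equiv.swap i j)) <|
    hypProb_lt_hypProb hq hqp hp (card_clusterEdges_comp_perm σ _).symm <|
    openCount_clusterEdges_lt_swap hk hi hj (by simp [hic, hjc]) hab hEi hEj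
      (hinner i hi) (hinner j hj)

lemma le_hsbmMeasure_real_mle_fails {m s a b x : ℕ} (hk : 2 ≤ k) (hq : (0 : ℝ) < q) (hqp : q < p)
    (hp : (p : ℝ) < 1) (hs : s ≤ m) (hab : a + x ≤ b) {t : ℝ} (ht : 0 ≤ t)
    {est : (KSet (2 * m) k → Bool) → Fin (2 * m) → Bool} (hest : isMLE p q est)
    {σ : Fin (2 * m) → Bool} (hσ : balanced σ) :
    1 - (2 * Real.exp (-(s * ((binomial ((m - s).choose (k - 1)) p).real {a} *
          (binomial ((m - s).choose (k - 1)) q).real {b}))) +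
        2 * s * Real.exp (-(t * x) +
          2 * s * (2 * m - 2).choose (k - 2) * (p * Real.exp t))) ≤
      (hsbmMeasure k p q σ).real {E | est E ≠ σ ∧ est E ≠ negB σ} := by
  obtain ⟨S, hS⟩ := exists_card_filter_eq hs hσ
  have card_S : #S = 2 * s := by
    rw [card_eq_sum_card_fiberwise (f := σ) (t := univ) fun _ _ => mem_univ _]
    simp [(hS _).1]
  have success_subset : {E | est E ≠ σ ∧ est E ≠ negB σ}ᶜ ⊆
      (⋃ c, {E | ∀ i ∈ {i ∈ S | σ i = c}, E ∉ starEvent k σ S a b i}) ∪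
        ⋃ i ∈ S, {E | x ≤ openCount (innerEdges k S i) E} := by
    intro E hE
    by_contra h
    simp only [Set.mem_union, Set.mem_iUnion, Set.mem_ofPred_eq, mem_filter, not_or, not_exists,
      not_forall, not_not, exists_prop, and_assoc] at h
    exact hE (mle_fails_of_mem_starEvent hk hq hqp hp hest hσ hab h.1 fun i hi =>
      not_le.1 fun hx => h.2 i ⟨hi, hx⟩)
  rw [sub_le_comm, ← probReal_compl_eq_one_sub .of_discrete]
  refine (measureReal_mono success_subset).trans <| (measureReal_union_le _ _).trans <|
    add_le_add ?_ ?_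
  · refine (measureReal_iUnion_fintype_le _).trans ((sum_le_sum fun c _ =>
      hsbmMeasure_real_forall_notMem_starEvent_le hk (fun c => (hS c).2) (filter_subset _ S)
        a b).trans_eq ?_)
    simp [(hS _).1]
  · refine (measureReal_biUnion_finset_le _ _).trans ((sum_le_card_nsmul _ _ _ fun i _ =>
      hsbmMeasure_real_le_openCount_innerEdges hk hqp.le S i x ht).trans_eq ?_)
    simp [card_S]

end FailureProbability

section PoissonRate

open InformationTheory Topology

/-- The Poisson large-deviation rate `θ - x + x log (x / θ)`: if `N p ≈ θ L`, then a binomial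
variable with parameters `N` and `p` is close to `x L` with probability
`exp (-(poissonRate θ x + o(1)) L)`. -/
noncomputable def poissonRate (θ x : ℝ) : ℝ := θ * klFun (x / θ)

@[fun_prop]
lemma continuous_poissonRate (θ : ℝ) : Continuous (poissonRate θ) :=
  continuous_const.mul (continuous_klFun.comp (continuous_id.div_const θ))

lemma poissonRate_eq {θ x : ℝ} (hθ : 0 < θ) (hx : 0 < x) :
    poissonRate θ x = θ - x * (Real.log θ - Real.log x + 1) := by
  rw [poissonRate, klFun_apply, Real.log_div hx.ne' hθ.ne']
  field_simp
  ring

lemma poissonRate_add_poissonRate_sqrt_mul_sqrt {α β : ℝ} (hα : 0 < α) (hβ : 0 < β) :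
    poissonRate α (√α * √β) + poissonRate β (√α * √β) = (√α - √β) ^ 2 := by
  rw [poissonRate_eq hα (by positivity), poissonRate_eq hβ (by positivity),
    Real.log_mul (by positivity) (by positivity), Real.log_sqrt hα.le, Real.log_sqrt hβ.le, sub_sq,
    Real.sq_sqrt hα.le, Real.sq_sqrt hβ.le]
  ring

lemma exists_poissonRate_add_poissonRate_lt {α β c : ℝ} (hα : 0 < α) (hβ : 0 < β)
    (hc : (√α - √β) ^ 2 < c) :
    ∃ γ > 0, ∃ δ > 0, poissonRate α γ + poissonRate β (γ + δ) < c := by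
  refine ⟨√α * √β, by positivity, ?_⟩
  have rate_continuous :
      Continuous fun δ => poissonRate α (√α * √β) + poissonRate β (√α * √β + δ) := by fun_prop
  have near_zero : ∀ᶠ δ in 𝓝[>] 0,
      poissonRate α (√α * √β) + poissonRate β (√α * √β + δ) < c :=
    nhdsWithin_le_nhds <| rate_continuous.continuousAt.eventually_lt_const <| by
      simpa only [add_zero, poissonRate_add_poissonRate_sqrt_mul_sqrt hα hβ] using hc
  exact (eventually_mem_nhdsWithin.and near_zero).exists

end PoissonRate

section BinomialMass

open Nat Topology

/-- The probability that a binomial variable with parameters `N` and `p` equals `a`, as a function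
of an arbitrary real `p`. -/
noncomputable def binomialMass (N : ℕ) (p : ℝ) (a : ℕ) : ℝ :=
  N.choose a * p ^ a * (1 - p) ^ (N - a)

lemma binomial_real_singleton_eq_binomialMass (N : ℕ) (p : unitInterval) (a : ℕ) :
    (ProbabilityTheory.binomial N p).real {a} = binomialMass N p a :=
  ProbabilityTheory.binomial_real_singleton ..

lemma tendsto_log_factorial_div_sub_log :
    Tendsto (fun n : ℕ => Real.log n ! / n - Real.log n) atTop (𝓝 (-1)) := by
  have log_seq_div : Tendsto (fun n : ℕ => Real.log (Stirling.stirlingSeq n) / n) atTop (𝓝 0) :=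
    (Stirling.tendsto_stirlingSeq_sqrt_pi.log (by positivity)).div_atTop
      tendsto_natCast_atTop_atTop
  have log_div : Tendsto (fun n : ℕ => Real.log (2 * n) / (2 * n)) atTop (𝓝 0) := by
    have := Real.isLittleO_log_id_atTop.tendsto_div_nhds_zero
    exact this.comp (tendsto_natCast_atTop_atTop.const_mul_atTop two_pos)
  have expansion : ∀ᶠ n : ℕ in atTop,
      Real.log (Stirling.stirlingSeq n) / n + Real.log (2 * n) / (2 * n) - 1 =
        Real.log n ! / n - Real.log n := by
    filter_upwards [eventually_ne_atTop 0] with n hn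
    rw [Stirling.log_stirlingSeq_formula, Real.log_div (by positivity) (by positivity),
      Real.log_exp]
    field_simp
    ring
  simpa using ((log_seq_div.add log_div).sub_const 1).congr' expansion

lemma exp_le_binomialMass {N a : ℕ} {p : ℝ} (hp₀ : 0 < p) (hp₁ : p < 1) (ha : a < N) :
    Real.exp (a * Real.log ((N - a) * p) - Real.log a ! - N * p / (1 - p)) ≤
      binomialMass N p a := by
  have hNa : (0 : ℝ) < N - a := sub_pos.2 (Nat.cast_lt.2 ha)
  have choose_bound : ((N : ℝ) - a) ^ a / a ! ≤ N.choose a := by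
    refine le_trans ?_ (Nat.pow_le_choose a N)
    rw [Nat.sub_add_comm ha.le, Nat.cast_add_one, Nat.cast_sub ha.le]
    gcongr
    linarith
  have complement_bound : Real.exp (-(N * p / (1 - p))) ≤ (1 - p) ^ (N - a) := by
    have log_bound : -(p / (1 - p)) ≤ Real.log (1 - p) := by
      refine (Real.one_sub_inv_le_log_of_pos (sub_pos.2 hp₁)).trans_eq' ?_
      field_simp [(sub_pos.2 hp₁).ne']
      ring
    calc Real.exp (-(N * p / (1 - p))) = Real.exp (-(p / (1 - p))) ^ N := by
          rw [← Real.exp_nat_mul]; ring_nf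
      _ ≤ (1 - p) ^ N := by
          gcongr
          exact (Real.le_log_iff_exp_le (sub_pos.2 hp₁)).1 log_bound
      _ ≤ (1 - p) ^ (N - a) :=
          pow_le_pow_of_le_one (sub_pos.2 hp₁).le (by linarith) (N.sub_le a)
  calc Real.exp (a * Real.log ((N - a) * p) - Real.log a ! - N * p / (1 - p))
      = (N - a) ^ a / a ! * p ^ a * Real.exp (-(N * p / (1 - p))) := by
        rw [sub_eq_add_neg, Real.exp_add, Real.exp_sub, Real.exp_nat_mul,
          Real.exp_log (by positivity), Real.exp_log (by positivity), mul_pow]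
        ring
    _ ≤ binomialMass N p a := by unfold binomialMass; gcongr

variable {ι : Type*} {l : Filter ι} {L p : ι → ℝ} {N a : ι → ℕ} {θ x : ℝ}

lemma tendsto_atTop_of_tendsto_div_pos {f : ι → ℝ} {c : ℝ} (hL : Tendsto L l atTop) (hc : 0 < c)
    (hf : Tendsto (fun i => f i / L i) l (𝓝 c)) : Tendsto f l atTop :=
  (hf.pos_mul_atTop hc hL).congr' <| (hL.eventually_ne_atTop 0).mono fun _ hi =>
    div_mul_cancel₀ _ hi

lemma eventually_exp_le_binomialMass (hL : Tendsto L l atTop) (hp₀ : ∀ᶠ i in l, 0 < p i)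
    (hp : Tendsto p l (𝓝 0)) (hθ : 0 < θ) (hN : Tendsto (fun i => N i * p i / L i) l (𝓝 θ))
    (hx : 0 < x) (ha : Tendsto (fun i => a i / L i) l (𝓝 x)) {R : ℝ} (hR : poissonRate θ x < R) :
    ∀ᶠ i in l, Real.exp (-(R * L i)) ≤ binomialMass (N i) (p i) (a i) := by
  have a_tendsto : Tendsto (fun i => (a i : ℝ)) l atTop :=
    tendsto_atTop_of_tendsto_div_pos hL hx ha
  have log_factorial := tendsto_log_factorial_div_sub_log.comp
    (tendsto_natCast_atTop_iff.1 a_tendsto)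
  have ratio : Tendsto (fun i => N i * p i / L i / (a i / L i) - p i) l (𝓝 (θ / x)) := by
    simpa using (hN.div ha hx.ne').sub hp
  have exponent := (ha.mul ((ratio.log (by positivity)).sub log_factorial)).sub
    (hN.div (hp.const_sub 1) (by simp))
  have limit_eq : x * (Real.log (θ / x) - -1) - θ / (1 - 0) = -poissonRate θ x := by
    rw [poissonRate_eq hθ hx, Real.log_div hθ.ne' hx.ne']
    ring
  rw [limit_eq] at exponent
  filter_upwards [exponent.eventually_const_lt (neg_lt_neg hR), hL.eventually_gt_atTop 0, hp₀,
    hp.eventually_lt_const one_pos, a_tendsto.eventually_gt_atTop 0,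
    ratio.eventually_const_lt (div_pos hθ hx)] with i bound hLi hpi₀ hpi₁ hai hratio
  have ratio_eq : N i * p i / L i / (a i / L i) - p i = (N i - a i) * p i / a i := by
    field_simp
  have a_lt_N : a i < N i := by
    rw [ratio_eq, div_pos_iff_of_pos_right hai, mul_pos_iff_of_pos_right hpi₀, sub_pos] at hratio
    exact_mod_cast hratio
  refine le_trans (Real.exp_le_exp.2 ?_) (exp_le_binomialMass hpi₀ hpi₁ a_lt_N)
  have hNa : (0 : ℝ) < N i - a i := sub_pos.2 (Nat.cast_lt.2 a_lt_N)
  rw [ratio_eq, Real.log_div (by positivity) hai.ne'] at bound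
  simp only [Function.comp_apply, Pi.div_apply] at bound
  rw [← neg_mul]
  refine (mul_le_mul_of_nonneg_right bound.le hLi.le).trans_eq ?_
  have : 1 - p i ≠ 0 := (sub_pos.2 hpi₁).ne'
  field_simp
  ring

lemma tendsto_choose_div_choose {A B : ι → ℕ} {c : ℝ} (j : ℕ) (hA : Tendsto A l atTop)
    (hB : Tendsto B l atTop) (hc : Tendsto (fun i => (A i : ℝ) / B i) l (𝓝 c)) :
    Tendsto (fun i => ((A i).choose j : ℝ) / (B i).choose j) l (𝓝 (c ^ j)) := by
  have equivalent := ((isEquivalent_choose j).comp_tendsto hA).div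
    ((isEquivalent_choose j).comp_tendsto hB)
  refine equivalent.symm.tendsto_nhds ((hc.pow j).congr fun i => ?_)
  simp only [Function.comp_apply, Pi.div_apply, div_pow]
  field_simp

end BinomialMass

section Threshold

open Topology

/-- The number of vertices of each label set aside when bounding the failure probability from below:
a vanishing fraction of the `n` vertices, but `n ^ (1 - o(1))` of them. -/
noncomputable def setAside (n : ℕ) : ℕ := ⌊n / Real.log n⌋₊

lemma tendsto_log_natCast_atTop : Tendsto (fun n : ℕ => Real.log n) atTop atTop :=
  Real.tendsto_log_atTop.comp tendsto_natCast_atTop_atTop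

lemma tendsto_log_natCast_div : Tendsto (fun n : ℕ => Real.log n / n) atTop (𝓝 0) :=
  Real.isLittleO_log_id_atTop.tendsto_div_nhds_zero.comp tendsto_natCast_atTop_atTop

lemma tendsto_natCast_div_sub_one : Tendsto (fun n : ℕ => (n : ℝ) / (n - 1)) atTop (𝓝 1) := by
  simpa [sub_eq_add_neg] using tendsto_natCast_div_add_atTop (-1 : ℝ)

lemma tendsto_two_mul_atTop : Tendsto (fun m : ℕ => 2 * m) atTop atTop :=
  tendsto_id.const_mul_atTop' two_pos

lemma tendsto_setAside_div : Tendsto (fun n : ℕ => (setAside n : ℝ) / n) atTop (𝓝 0) := by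
  refine squeeze_zero' (.of_forall fun n => by positivity) ?_
    tendsto_log_natCast_atTop.inv_tendsto_atTop
  filter_upwards [eventually_gt_atTop 0] with n hn
  have hn' : (0 : ℝ) < n := Nat.cast_pos.2 hn
  rw [div_le_iff₀ hn', Pi.inv_apply, inv_mul_eq_div]
  exact Nat.floor_le (by positivity)

lemma eventually_setAside_two_mul_le : ∀ᶠ m : ℕ in atTop, setAside (2 * m) ≤ m := by
  filter_upwards [eventually_gt_atTop 0, tendsto_two_mul_atTop.eventually <|
    tendsto_setAside_div.eventually_lt_const (show (0 : ℝ) < 1 / 2 by norm_num)] with m hm hs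
  rw [div_lt_iff₀ (by positivity)] at hs
  push_cast at hs
  exact_mod_cast (show (setAside (2 * m) : ℝ) ≤ m by linarith)

lemma tendsto_div_log_atTop : Tendsto (fun n : ℕ => (n : ℝ) / Real.log n) atTop atTop := by
  have log_div_pos : ∀ᶠ n : ℕ in atTop, Real.log n / n ∈ Set.Ioi 0 := by
    filter_upwards [tendsto_log_natCast_atTop.eventually_gt_atTop 0, eventually_ne_atTop 0]
      with n hlog hn
    exact Set.mem_Ioi.2 (by positivity)
  refine (tendsto_nhdsWithin_iff.2
    ⟨tendsto_log_natCast_div, log_div_pos⟩).inv_tendsto_nhdsGT_zero.congr fun n => ?_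
  exact inv_div _ _

lemma eventually_setAside_pos : ∀ᶠ n : ℕ in atTop, 0 < setAside n :=
  (tendsto_div_log_atTop.eventually_ge_atTop 1).mono fun _ => Nat.floor_pos.2

lemma tendsto_log_setAside_div_log :
    Tendsto (fun n : ℕ => Real.log (setAside n) / Real.log n) atTop (𝓝 1) := by
  have floor_ratio : Tendsto (fun n : ℕ => Real.log (setAside n / (n / Real.log n)) / Real.log n)
      atTop (𝓝 0) :=
    (((tendsto_nat_floor_div_atTop (R := ℝ)).comp tendsto_div_log_atTop).log one_ne_zero).div_atTop
      tendsto_log_natCast_atTop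
  have log_log : Tendsto (fun n : ℕ => Real.log (Real.log n) / Real.log n) atTop (𝓝 0) :=
    Real.isLittleO_log_id_atTop.tendsto_div_nhds_zero.comp tendsto_log_natCast_atTop
  have limit := (floor_ratio.const_add 1).sub log_log
  rw [add_zero, sub_zero] at limit
  refine limit.congr' ?_
  filter_upwards [tendsto_log_natCast_atTop.eventually_gt_atTop 0, eventually_ne_atTop 0,
    eventually_setAside_pos] with n hlog hn hs_pos
  have hs : (setAside n : ℝ) ≠ 0 := Nat.cast_ne_zero.2 hs_pos.ne'
  rw [Real.log_div hs (by positivity), Real.log_div (by positivity) hlog.ne']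
  field_simp
  ring

variable {k : ℕ} {α β γ δ : ℝ}

lemma pParam_pos {n : ℕ} (hα : 0 < α) (hkn : k ≤ n) (hn : 1 < n) : 0 < pParam k α n := by
  have := Nat.choose_pos (Nat.sub_le_sub_right hkn 1)
  have := Real.log_pos (Nat.one_lt_cast.2 hn)
  unfold pParam
  positivity

lemma choose_mul_pParam {n : ℕ} (hk : 2 ≤ k) (hkn : k ≤ n) (α : ℝ) :
    (n - 2).choose (k - 2) * pParam k α n = α * (k - 1) * (Real.log n / (n - 1)) := by
  obtain ⟨j, rfl⟩ := Nat.exists_eq_add_of_le' hk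
  obtain ⟨i, rfl⟩ := Nat.exists_eq_add_of_le' (hk.trans hkn)
  have hchoose : ((i + 1).choose (j + 1) : ℝ) ≠ 0 :=
    Nat.cast_ne_zero.2 (Nat.choose_pos (by omega)).ne'
  have absorption : ((i : ℝ) + 1) * i.choose j = (i + 1).choose (j + 1) * (j + 1) := by
    exact_mod_cast Nat.add_one_mul_choose_eq i j
  have hi : (i : ℝ) + 1 ≠ 0 := by positivity
  simp only [pParam, Nat.add_sub_cancel, Nat.reduceSubDiff, Nat.cast_add, Nat.cast_ofNat]
  rw [show (i : ℝ) + 2 - 1 = i + 1 by ring, show (j : ℝ) + 2 - 1 = j + 1 by ring]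
  field_simp
  linear_combination α * Real.log (i + 2) * absorption

lemma tendsto_pParam (hk : 2 ≤ k) (hα : 0 < α) : Tendsto (pParam k α) atTop (𝓝 0) := by
  have log_div : Tendsto (fun n : ℕ => α * (k - 1) * (Real.log n / (n - 1))) atTop (𝓝 0) := by
    have := (tendsto_log_natCast_div.mul tendsto_natCast_div_sub_one).const_mul (α * (k - 1))
    rw [zero_mul, mul_zero] at this
    refine this.congr' ?_
    filter_upwards [eventually_ne_atTop 0] with n hn
    field_simp
  refine tendsto_of_tendsto_of_tendsto_of_le_of_le' tendsto_const_nhds log_div ?_ ?_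
  · filter_upwards [eventually_ge_atTop k] with n hkn
    exact (pParam_pos hα hkn (by omega)).le
  · filter_upwards [eventually_ge_atTop k] with n hkn
    rw [← choose_mul_pParam hk hkn]
    exact le_mul_of_one_le_left (pParam_pos hα hkn (by omega)).le <|
      Nat.one_le_cast.2 (Nat.choose_pos (by omega))

lemma tendsto_setAside_mul_choose_mul_pParam_div_log (hk : 2 ≤ k) (α : ℝ) :
    Tendsto (fun n : ℕ => setAside n * (n - 2).choose (k - 2) * pParam k α n / Real.log n)
      atTop (𝓝 0) := by
  have limit := (tendsto_setAside_div.mul tendsto_natCast_div_sub_one).const_mul (α * (k - 1))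
  rw [zero_mul, mul_zero] at limit
  refine limit.congr' ?_
  filter_upwards [eventually_ge_atTop k, tendsto_log_natCast_atTop.eventually_gt_atTop 0]
    with n hkn hlog
  have hn : (n : ℝ) ≠ 0 := Nat.cast_ne_zero.2 (by omega)
  rw [mul_assoc (setAside n : ℝ), choose_mul_pParam hk hkn]
  field_simp

lemma tendsto_choose_mul_pParam_div_log (k : ℕ) (α : ℝ) :
    Tendsto (fun m : ℕ => (m - setAside (2 * m)).choose (k - 1) * pParam k α (2 * m) /
      Real.log (2 * m : ℕ)) atTop (𝓝 (α / 2 ^ (k - 1))) := by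
  have pred_tendsto : Tendsto (fun m : ℕ => 2 * m - 1) atTop atTop :=
    (tendsto_sub_atTop_nat 1).comp tendsto_two_mul_atTop
  have ratio : Tendsto (fun m : ℕ => ((m - setAside (2 * m) : ℕ) : ℝ) / (2 * m - 1 : ℕ)) atTop
      (𝓝 (1 / 2)) := by
    have limit := ((tendsto_setAside_div.const_sub (1 / 2)).mul tendsto_natCast_div_sub_one).comp
      tendsto_two_mul_atTop
    rw [sub_zero, mul_one] at limit
    refine limit.congr' ?_
    filter_upwards [eventually_setAside_two_mul_le, eventually_gt_atTop 0] with m hs hm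
    rw [Nat.cast_sub hs, Nat.cast_pred (by omega), Function.comp_apply]
    push_cast
    field_simp
  have remainder_tendsto : Tendsto (fun m : ℕ => m - setAside (2 * m)) atTop atTop :=
    tendsto_natCast_atTop_iff.1 <| tendsto_atTop_of_tendsto_div_pos
      (tendsto_natCast_atTop_iff.2 pred_tendsto) one_half_pos ratio
  have limit := (tendsto_choose_div_choose (k - 1) remainder_tendsto pred_tendsto ratio).const_mul α
  rw [_root_.one_div_pow, mul_one_div] at limit
  refine limit.congr' ?_
  filter_upwards [(tendsto_log_natCast_atTop.comp tendsto_two_mul_atTop).eventually_ne_atTop 0]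
    with m hlog
  simp only [Function.comp_apply] at hlog
  rw [pParam]
  field_simp

lemma tendsto_exp_neg_setAside_mul_binomialMass (hk : 2 ≤ k) (hα : 0 < α)
    (hβ : 0 < β) (hγ : 0 < γ) (hδ : 0 < δ) {a b : ℕ → ℕ}
    (ha : Tendsto (fun m => a m / Real.log (2 * m : ℕ)) atTop (𝓝 γ))
    (hb : Tendsto (fun m => b m / Real.log (2 * m : ℕ)) atTop (𝓝 δ))
    (hrate : poissonRate (α / 2 ^ (k - 1)) γ + poissonRate (β / 2 ^ (k - 1)) δ < 1) :
    Tendsto (fun m : ℕ => Real.exp (-(setAside (2 * m) *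
      (binomialMass ((m - setAside (2 * m)).choose (k - 1)) (pParam k α (2 * m)) (a m) *
        binomialMass ((m - setAside (2 * m)).choose (k - 1)) (pParam k β (2 * m)) (b m)))))
      atTop (𝓝 0) := by
  obtain ⟨R₁, hR₁, hR₁_lt⟩ := exists_between (lt_sub_iff_add_lt.2 hrate)
  obtain ⟨R₂, hR₂, hR₂_lt⟩ := exists_between (lt_sub_comm.1 hR₁_lt)
  have log_tendsto := tendsto_log_natCast_atTop.comp tendsto_two_mul_atTop
  have mass_bound {θ c x : ℝ} {d : ℕ → ℕ} (hθ : 0 < θ) (hx : 0 < x)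
      (hd : Tendsto (fun m => d m / Real.log (2 * m : ℕ)) atTop (𝓝 x))
      (hc : poissonRate (θ / 2 ^ (k - 1)) x < c) := eventually_exp_le_binomialMass log_tendsto
    (tendsto_two_mul_atTop.eventually <| (eventually_ge_atTop k).mono fun n hn =>
      pParam_pos hθ hn (hk.trans hn))
    ((tendsto_pParam hk hθ).comp tendsto_two_mul_atTop) (by positivity)
    (tendsto_choose_mul_pParam_div_log k θ) hx hd hc
  have exponent_tendsto : Tendsto (fun m : ℕ => Real.log (setAside (2 * m)) -
      (R₁ + R₂) * Real.log (2 * m : ℕ)) atTop atTop := by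
    refine tendsto_atTop_of_tendsto_div_pos log_tendsto (show 0 < 1 - (R₁ + R₂) by linarith) <|
      ((tendsto_log_setAside_div_log.comp tendsto_two_mul_atTop).sub_const (R₁ + R₂)).congr' ?_
    filter_upwards [log_tendsto.eventually_ne_atTop 0] with m hm
    simp only [Function.comp_apply] at hm ⊢
    field_simp
  refine Real.tendsto_exp_neg_atTop_nhds_zero.comp <|
    tendsto_atTop_mono' _ ?_ (Real.tendsto_exp_atTop.comp exponent_tendsto)
  filter_upwards [mass_bound hα hγ ha hR₁, mass_bound hβ hδ hb hR₂,
    tendsto_two_mul_atTop.eventually eventually_setAside_pos] with m ha_m hb_m hs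
  calc Real.exp (Real.log (setAside (2 * m)) - (R₁ + R₂) * Real.log (2 * m : ℕ))
      = setAside (2 * m) * (Real.exp (-(R₁ * Real.log (2 * m : ℕ))) *
          Real.exp (-(R₂ * Real.log (2 * m : ℕ)))) := by
        rw [← Real.exp_add, ← neg_add, ← add_mul, sub_eq_add_neg, Real.exp_add,
          Real.exp_log (Nat.cast_pos.2 hs)]
    _ ≤ _ := mul_le_mul_of_nonneg_left
        (mul_le_mul ha_m hb_m (Real.exp_pos _).le ((Real.exp_pos _).le.trans ha_m))
        (Nat.cast_nonneg _)

lemma tendsto_setAside_mul_exp (hk : 2 ≤ k) (α : ℝ) (hδ : 0 < δ) {x : ℕ → ℕ}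
    (hx : Tendsto (fun m => x m / Real.log (2 * m : ℕ)) atTop (𝓝 δ)) :
    Tendsto (fun m : ℕ => 2 * setAside (2 * m) * Real.exp (-(2 / δ * x m) +
      2 * setAside (2 * m) * (2 * m - 2).choose (k - 2) *
        (pParam k α (2 * m) * Real.exp (2 / δ)))) atTop (𝓝 0) := by
  have log_tendsto := tendsto_log_natCast_atTop.comp tendsto_two_mul_atTop
  have exponent_tendsto : Tendsto (fun m : ℕ => 2 / δ * x m -
      2 * setAside (2 * m) * (2 * m - 2).choose (k - 2) *
        (pParam k α (2 * m) * Real.exp (2 / δ)) - Real.log (2 * m : ℕ)) atTop atTop := by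
    have limit := ((hx.const_mul (2 / δ)).sub
      (((tendsto_setAside_mul_choose_mul_pParam_div_log hk α).comp
        tendsto_two_mul_atTop).const_mul (2 * Real.exp (2 / δ)))).sub_const 1
    rw [div_mul_cancel₀ _ hδ.ne', mul_zero] at limit
    refine tendsto_atTop_of_tendsto_div_pos log_tendsto (by norm_num) (limit.congr' ?_)
    filter_upwards [log_tendsto.eventually_ne_atTop 0] with m hm
    simp only [Function.comp_apply] at hm ⊢
    field_simp
  refine squeeze_zero' (.of_forall fun m => by positivity) ?_
    (Real.tendsto_exp_neg_atTop_nhds_zero.comp exponent_tendsto)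
  filter_upwards [eventually_setAside_two_mul_le, eventually_gt_atTop 0] with m hs hm
  calc 2 * (setAside (2 * m) : ℝ) * Real.exp (-(2 / δ * x m) + 2 * setAside (2 * m) *
        (2 * m - 2).choose (k - 2) * (pParam k α (2 * m) * Real.exp (2 / δ)))
      ≤ Real.exp (Real.log (2 * m : ℕ)) * Real.exp (-(2 / δ * x m) + 2 * setAside (2 * m) *
        (2 * m - 2).choose (k - 2) * (pParam k α (2 * m) * Real.exp (2 / δ))) := by
        rw [Real.exp_log (by positivity), Nat.cast_mul, Nat.cast_ofNat]
        gcongr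
    _ = _ := by
        rw [← Real.exp_add, Function.comp_apply]
        ring_nf

lemma prEvent_mle_fails_mem_Icc {m s a x : ℕ} {p q t : ℝ} (hk : 2 ≤ k) (hq : 0 < q) (hqp : q < p)
    (hp : p < 1) (hs : s ≤ m) (ht : 0 ≤ t) {est : (KSet (2 * m) k → Bool) → Fin (2 * m) → Bool}
    (hest : isMLE p q est) :
    prEvent (2 * m) k p q (fun σ E => est E ≠ σ ∧ est E ≠ negB σ) ∈ Set.Icc
      (1 - (2 * Real.exp (-(s * (binomialMass ((m - s).choose (k - 1)) p a *
          binomialMass ((m - s).choose (k - 1)) q (a + x)))) +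
        2 * s * Real.exp (-(t * x) +
          2 * s * (2 * m - 2).choose (k - 2) * (p * Real.exp t)))) 1 := by
  lift p to unitInterval using ⟨(hq.trans hqp).le, hp.le⟩
  lift q to unitInterval using ⟨hq.le, (hqp.trans hp).le⟩
  simp only [← binomial_real_singleton_eq_binomialMass]
  exact ⟨le_prEvent p q fun σ hσ => le_hsbmMeasure_real_mle_fails hk hq hqp hp hs le_rfl ht hest hσ,
    prEvent_le_one p q _⟩

lemma eventually_pParam_lt_pParam_lt_one (hk : 2 ≤ k) (hβ : 0 < β) (hαβ : β < α) :
    ∀ᶠ n in atTop, 0 < pParam k β n ∧ pParam k β n < pParam k α n ∧ pParam k α n < 1 := by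
  filter_upwards [eventually_ge_atTop k,
    (tendsto_pParam hk (hβ.trans hαβ)).eventually_lt_const one_pos] with n hkn hlt_one
  have gap_pos := pParam_pos (sub_pos.2 hαβ) hkn (hk.trans hkn)
  rw [pParam, sub_mul, sub_div] at gap_pos
  exact ⟨pParam_pos hβ hkn (hk.trans hkn), sub_pos.1 gap_pos, hlt_one⟩

lemma sq_sqrt_div_sub_sqrt_div {c : ℝ} (hα : 0 ≤ α) (hβ : 0 ≤ β) (hc : 0 ≤ c) :
    (√(α / c) - √(β / c)) ^ 2 = (√α - √β) ^ 2 / c := by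
  rw [Real.sqrt_div hα, Real.sqrt_div hβ, ← sub_div, div_pow, Real.sq_sqrt hc]

lemma tendsto_floor_mul_log_div_log (hγ : 0 ≤ γ) :
    Tendsto (fun m : ℕ => (⌊γ * Real.log (2 * m : ℕ)⌋₊ : ℝ) / Real.log (2 * m : ℕ)) atTop (𝓝 γ) :=
  (tendsto_nat_floor_mul_div_atTop hγ).comp (tendsto_log_natCast_atTop.comp tendsto_two_mul_atTop)

end Threshold

/-- If `α > β > 0` and `I(α,β) < 1` then the ML estimator fails with
probability `1 - o(1)`. -/
theorem mle_fails_below_threshold (k : ℕ) (hk : 2 ≤ k) (α β : ℝ) (hβ : 0 < β) (hαβ : β < α)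
    (hI : (Real.sqrt α - Real.sqrt β) ^ 2 / 2 ^ (k - 1) < 1) :
    ∀ est : (m : ℕ) → (KSet (2 * m) k → Bool) → (Fin (2 * m) → Bool),
      (∀ m : ℕ, isMLE (pParam k α (2 * m)) (pParam k β (2 * m)) (est m)) →
      Tendsto (fun m : ℕ =>
          prEvent (2 * m) k (pParam k α (2 * m)) (pParam k β (2 * m))
            (fun σ E => est m E ≠ σ ∧ est m E ≠ negB σ))
        atTop (nhds 1) := by
  intro est hest
  have hα : 0 < α := hβ.trans hαβ
  rw [← sq_sqrt_div_sub_sqrt_div hα.le hβ.le (by positivity)] at hI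
  obtain ⟨γ, hγ, δ, hδ, hrate⟩ :=
    exists_poissonRate_add_poissonRate_lt (by positivity) (by positivity) hI
  have ha := tendsto_floor_mul_log_div_log hγ.le
  have hx := tendsto_floor_mul_log_div_log hδ.le
  have hax := (ha.add hx).congr fun m => by rw [← add_div, ← Nat.cast_add]
  have no_good_vertex :=
    tendsto_exp_neg_setAside_mul_binomialMass hk hα hβ hγ (add_pos hγ hδ) ha hax hrate
  have many_inner_edges := tendsto_setAside_mul_exp hk α hδ hx
  have lower_tendsto := ((no_good_vertex.const_mul 2).add many_inner_edges).const_sub 1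
  rw [mul_zero, add_zero, sub_zero] at lower_tendsto
  have bounds := ((tendsto_two_mul_atTop.eventually
    (eventually_pParam_lt_pParam_lt_one hk hβ hαβ)).and eventually_setAside_two_mul_le).mono
      fun m ⟨⟨hq, hqp, hp⟩, hs⟩ => prEvent_mle_fails_mem_Icc
        (a := ⌊γ * Real.log (2 * m : ℕ)⌋₊) (x := ⌊δ * Real.log (2 * m : ℕ)⌋₊)
        hk hq hqp hp hs (div_pos two_pos hδ).le (hest m)
  exact tendsto_of_tendsto_of_tendsto_of_le_of_le' lower_tendsto tendsto_const_nhds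
    (bounds.mono fun _ h => h.1) (bounds.mono fun _ h => h.2)
end

section
/- Suppose I(α,β) > 1. Then the failure probability of the maximum-likelihood estimator satisfies p_fail ≤ n^{−(I(α,β)−1)/2 + o(1)} as n → ∞; in particular p_fail = o(1). -/
open Finset Filter Matrix

open scoped Classical

/-!
If the estimator fails then, up to a global sign flip, some balanced labelling `τ ≠ σ` differing
from `σ` on at most half of its `+1` cluster is at least as likely as `σ`. For fixed `τ` this event
has probability at most the Bhattacharyya coefficient of the two laws, which is a product over
hyperedges: only those in-cluster for exactly one of `σ`, `τ` contribute a factor, of size at most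
`exp (-(√p - √q) ^ 2 / 2)`. On `n = 2 * m` vertices there are at most `(m.choose j) ^ 2` labellings
`τ` at mismatch `j`, each with at least `4 * splitCount m k j` such hyperedges. For `j ≤ δ * m` this
number is nearly linear in `j` with the optimal slope, so the terms of the union bound are at most
`n ^ (-s * j)` for any `s < 2 * (I - 1)`; for `δ * m < j ≤ m / 2` a crude linear lower bound
suffices, since the `4 ^ m` candidates are negligible against `exp (-c * m * log n)`. The sum is
dominated by a geometric series with first term `n ^ (-s)`.
-/

namespace HSBM

section Labellings

variable {n : ℕ} {σ τ : Fin n → Bool}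

/-- The cluster of the vertices labelled `+1`; the other cluster is its complement. -/
def plusSet (σ : Fin n → Bool) : Finset (Fin n) := {i | σ i = true}

lemma mem_plusSet {i : Fin n} : i ∈ plusSet σ ↔ σ i = true := by simp [plusSet]

lemma plusSet_injective : Function.Injective (plusSet : (Fin n → Bool) → Finset (Fin n)) :=
  fun _ _ h => funext fun i => Bool.eq_iff_iff.2 <| by
    rw [← mem_plusSet, ← mem_plusSet, h]

lemma plusSet_negB (σ : Fin n → Bool) : plusSet (negB σ) = (plusSet σ)ᶜ := by
  ext i; simp [plusSet, negB]

lemma negB_negB (σ : Fin n → Bool) : negB (negB σ) = σ := by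
  ext i; simp [negB]

lemma balanced_iff_card_plusSet : balanced σ ↔ 2 * #(plusSet σ) = n := Iff.rfl

lemma card_plusSet_of_balanced {m : ℕ} {σ : Fin (2 * m) → Bool} (hσ : balanced σ) :
    #(plusSet σ) = m := by
  have := balanced_iff_card_plusSet.1 hσ
  omega

lemma card_plusSet_compl_of_balanced {m : ℕ} {σ : Fin (2 * m) → Bool} (hσ : balanced σ) :
    #(plusSet σ)ᶜ = m := by
  rw [card_compl, Fintype.card_fin, card_plusSet_of_balanced hσ]
  omega

lemma card_plusSet_eq_of_balanced (hσ : balanced σ) (hτ : balanced τ) :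
    #(plusSet σ) = #(plusSet τ) := by
  have := balanced_iff_card_plusSet.1 hσ
  have := balanced_iff_card_plusSet.1 hτ
  omega

lemma balanced_negB (hσ : balanced σ) : balanced (negB σ) := by
  have := balanced_iff_card_plusSet.1 hσ
  rw [balanced_iff_card_plusSet, plusSet_negB, card_compl, Fintype.card_fin]
  omega

/-- The number of vertices labelled `+1` by `σ` and `-1` by `τ`. For balanced labellings this is
half their Hamming distance. -/
def mismatch (σ τ : Fin n → Bool) : ℕ := #(plusSet σ \ plusSet τ)

lemma mismatch_comm (hσ : balanced σ) (hτ : balanced τ) : mismatch σ τ = mismatch τ σ :=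
  card_sdiff_comm (card_plusSet_eq_of_balanced hσ hτ)

lemma mismatch_pos (hσ : balanced σ) (hτ : balanced τ) (h : τ ≠ σ) : 0 < mismatch σ τ := by
  refine card_pos.2 (sdiff_nonempty.2 fun hsub => h (plusSet_injective ?_))
  exact (eq_of_subset_of_card_le hsub (card_plusSet_eq_of_balanced hτ hσ).le).symm

lemma card_plusSet_inter_add_mismatch (σ τ : Fin n → Bool) :
    #(plusSet σ ∩ plusSet τ) + mismatch σ τ = #(plusSet σ) :=
  card_inter_add_card_sdiff _ _

lemma mismatch_negB (σ τ : Fin n → Bool) : mismatch σ (negB τ) = #(plusSet σ ∩ plusSet τ) := by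
  rw [mismatch, plusSet_negB, sdiff_compl, inf_eq_inter]

lemma card_balanced_mismatch_eq_le {m : ℕ} {σ : Fin (2 * m) → Bool} (hσ : balanced σ) (j : ℕ) :
    #{τ : Fin (2 * m) → Bool | balanced τ ∧ mismatch σ τ = j} ≤ m.choose j ^ 2 := by
  have hcard : #(powersetCard j (plusSet σ) ×ˢ powersetCard j (plusSet σ)ᶜ) = m.choose j ^ 2 := by
    rw [card_product, card_powersetCard, card_powersetCard, card_plusSet_of_balanced hσ,
      card_plusSet_compl_of_balanced hσ, sq]
  rw [← hcard]
  refine card_le_card_of_injOn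
    (fun τ : Fin (2 * m) → Bool => (plusSet σ \ plusSet τ, plusSet τ \ plusSet σ)) ?_ ?_
  · simp only [Set.MapsTo, coe_filter, mem_univ, true_and, Set.mem_ofPred_eq, mem_coe, mem_product,
      mem_powersetCard]
    rintro τ ⟨hτ, rfl⟩
    have hsub : plusSet τ \ plusSet σ ⊆ (plusSet σ)ᶜ :=
      fun i hi => mem_compl.2 (Finset.mem_sdiff.1 hi).2
    exact ⟨⟨sdiff_subset, rfl⟩, hsub, mismatch_comm hτ hσ⟩
  · intro τ _ τ' _ h
    simp only [Prod.mk.injEq, Finset.ext_iff, Finset.mem_sdiff] at h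
    refine plusSet_injective (Finset.ext fun i => ?_)
    have := h.1 i
    have := h.2 i
    tauto

end Labellings

section Edges

variable {n k : ℕ}

lemma inCluster_iff_subset {σ : Fin n → Bool} {e : Finset (Fin n)} :
    inCluster σ e ↔ e ⊆ plusSet σ ∨ e ⊆ (plusSet σ)ᶜ := by
  simp only [subset_iff, mem_compl, mem_plusSet, Bool.not_eq_true]
  refine ⟨fun h => ?_, ?_⟩
  · by_contra! ⟨⟨i, hi, hσi⟩, j, hj, hσj⟩
    exact hσi (h i hi j hj ▸ by simpa using hσj)
  · rintro (h | h) i hi j hj <;> rw [h hi, h hj]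

lemma inCluster_negB {σ : Fin n → Bool} {e : Finset (Fin n)} :
    inCluster (negB σ) e ↔ inCluster σ e := by
  rw [inCluster_iff_subset, inCluster_iff_subset, plusSet_negB, compl_compl, or_comm]

lemma card_filter_subset (A : Finset (Fin n)) : #{e : KSet n k | e.1 ⊆ A} = (#A).choose k := by
  rw [← card_powersetCard, ← card_map (Function.Embedding.subtype _)]
  congr 1
  ext e
  simp [mem_powersetCard, and_comm]

lemma card_inCluster (hk : k ≠ 0) (σ : Fin n → Bool) :
    #{e : KSet n k | inCluster σ e.1} = (#(plusSet σ)).choose k + (#(plusSet σ)ᶜ).choose k := by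
  rw [← card_filter_subset, ← card_filter_subset, ← card_union_of_disjoint, ← filter_or]
  · simp only [inCluster_iff_subset]
  · refine disjoint_filter.2 fun e _ h h' => hk ?_
    rw [← e.2, card_eq_zero, ← subset_empty, ← inter_compl (plusSet σ)]
    exact subset_inter h h'

lemma card_inCluster_and_inCluster_le (σ τ : Fin n → Bool) :
    #{e : KSet n k | inCluster σ e.1 ∧ inCluster τ e.1} ≤
      (#(plusSet σ ∩ plusSet τ)).choose k + (#(plusSet σ ∩ (plusSet τ)ᶜ)).choose k +
        (#((plusSet σ)ᶜ ∩ plusSet τ)).choose k + (#((plusSet σ)ᶜ ∩ (plusSet τ)ᶜ)).choose k := by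
  simp only [← card_filter_subset]
  refine (card_le_card fun e he => ?_).trans <| (card_union_le _ _).trans <| Nat.add_le_add_right
    ((card_union_le _ _).trans <| Nat.add_le_add_right (card_union_le _ _) _) _
  simp only [inCluster_iff_subset, mem_union, mem_filter_univ, subset_inter_iff] at he ⊢
  tauto

/-- The potential hyperedges whose edge probabilities under `σ` and `τ` differ: those in-cluster
for exactly one of the two labellings. -/
def separating (k : ℕ) (σ τ : Fin n → Bool) : Finset (KSet n k) :=
  {e | ¬(inCluster σ e.1 ↔ inCluster τ e.1)}

lemma card_separating_add (σ τ : Fin n → Bool) :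
    #(separating k σ τ) + 2 * #{e : KSet n k | inCluster σ e.1 ∧ inCluster τ e.1} =
      #{e : KSet n k | inCluster σ e.1} + #{e : KSet n k | inCluster τ e.1} := by
  simp only [separating, card_filter, mul_sum, ← sum_add_distrib]
  refine sum_congr rfl fun e _ => ?_
  split_ifs <;> grind

/-- The number of `k`-subsets of an `m`-set that meet both parts of a partition into parts of
sizes `j` and `m - j` (valid for `j ≤ m` and `k ≠ 0`). It is real-valued to avoid truncated
subtraction. -/
def splitCount (m k j : ℕ) : ℝ := m.choose k - (m - j).choose k - j.choose k

lemma four_mul_splitCount_le_card_separating {m : ℕ} (hk : k ≠ 0) {σ τ : Fin (2 * m) → Bool}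
    (hσ : balanced σ) (hτ : balanced τ) :
    4 * splitCount m k (mismatch σ τ) ≤ #(separating k σ τ) := by
  have hpp : #(plusSet σ ∩ plusSet τ) = m - mismatch σ τ := by
    have := card_plusSet_inter_add_mismatch σ τ
    rw [card_plusSet_of_balanced hσ] at this
    omega
  have hpm : #(plusSet σ ∩ (plusSet τ)ᶜ) = mismatch σ τ := by
    rw [← sdiff_eq_inter_compl, mismatch]
  have hmp : #((plusSet σ)ᶜ ∩ plusSet τ) = mismatch σ τ := by
    rw [inter_comm, ← sdiff_eq_inter_compl, mismatch_comm hσ hτ, mismatch]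
  have hmm : #((plusSet σ)ᶜ ∩ (plusSet τ)ᶜ) = m - mismatch σ τ := by
    have := card_inter_add_card_sdiff (plusSet σ)ᶜ (plusSet τ)
    rw [hmp, sdiff_eq_inter_compl, card_plusSet_compl_of_balanced hσ] at this
    omega
  have hcommon := card_inCluster_and_inCluster_le (k := k) σ τ
  have hsep := card_separating_add (k := k) σ τ
  rw [card_inCluster hk, card_inCluster hk, card_plusSet_of_balanced hσ,
    card_plusSet_compl_of_balanced hσ, card_plusSet_of_balanced hτ,
    card_plusSet_compl_of_balanced hτ] at hsep
  rw [hpp, hpm, hmp, hmm] at hcommon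
  have : 4 * m.choose k ≤ #(separating k σ τ) +
      4 * ((m - mismatch σ τ).choose k + (mismatch σ τ).choose k) := by omega
  have : (4 * m.choose k : ℝ) ≤ #(separating k σ τ) +
      4 * ((m - mismatch σ τ).choose k + (mismatch σ τ).choose k) := mod_cast this
  rw [splitCount]
  linarith

end Edges

section Bhattacharyya

/-- The Bhattacharyya coefficient `∑ √(P x * Q x)` of the Bernoulli laws with success
probabilities `a` and `b`. -/
noncomputable def bhattacharyya (a b : ℝ) : ℝ := √(a * b) + √((1 - a) * (1 - b))

lemma bhattacharyya_nonneg (a b : ℝ) : 0 ≤ bhattacharyya a b := by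
  unfold bhattacharyya; positivity

lemma bhattacharyya_comm (a b : ℝ) : bhattacharyya a b = bhattacharyya b a := by
  simp only [bhattacharyya, mul_comm]

lemma bhattacharyya_self {a : ℝ} (ha : a ∈ Set.Icc 0 1) : bhattacharyya a a = 1 := by
  rw [bhattacharyya, Real.sqrt_mul_self ha.1, Real.sqrt_mul_self (sub_nonneg.2 ha.2)]
  ring

lemma bhattacharyya_le_exp {a b : ℝ} (ha : a ∈ Set.Icc 0 1) (hb : b ∈ Set.Icc 0 1) :
    bhattacharyya a b ≤ Real.exp (-((√a - √b) ^ 2 / 2)) := by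
  have ha' := sub_nonneg.2 ha.2
  have hb' := sub_nonneg.2 hb.2
  calc bhattacharyya a b = 1 - (√a - √b) ^ 2 / 2 - (√(1 - a) - √(1 - b)) ^ 2 / 2 := by
        rw [bhattacharyya, Real.sqrt_mul ha.1, Real.sqrt_mul ha']
        linear_combination (Real.sq_sqrt ha.1 + Real.sq_sqrt hb.1 + Real.sq_sqrt ha' +
          Real.sq_sqrt hb') / 2
    _ ≤ -((√a - √b) ^ 2 / 2) + 1 := by linarith [sq_nonneg (√(1 - a) - √(1 - b))]
    _ ≤ Real.exp (-((√a - √b) ^ 2 / 2)) := Real.add_one_le_exp _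

lemma sum_sqrt_prod_bernoulli {ι : Type*} [Fintype ι] [DecidableEq ι] {a b : ι → ℝ}
    (ha : ∀ i, a i ∈ Set.Icc 0 1) (hb : ∀ i, b i ∈ Set.Icc 0 1) :
    ∑ E : ι → Bool, √((∏ i, if E i then a i else 1 - a i) * ∏ i, if E i then b i else 1 - b i) =
      ∏ i, bhattacharyya (a i) (b i) := by
  have hweight : ∀ {c d : ℝ}, c ∈ Set.Icc 0 1 → d ∈ Set.Icc 0 1 → ∀ x : Bool,
      0 ≤ (if x then c else 1 - c) * if x then d else 1 - d := fun hc hd x => by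
    cases x
    · simpa using mul_nonneg (sub_nonneg.2 hc.2) (sub_nonneg.2 hd.2)
    · simpa using mul_nonneg hc.1 hd.1
  simp_rw [← prod_mul_distrib, Real.sqrt_prod _ fun i _ => hweight (ha i) (hb i) _]
  rw [← Fintype.prod_sum fun i (x : Bool) =>
    √((if x then a i else 1 - a i) * if x then b i else 1 - b i)]
  simp [bhattacharyya]

end Bhattacharyya

section Likelihood

variable {n k : ℕ} {p q : ℝ}

lemma edgeP_mem_Icc (hp : p ∈ Set.Icc 0 1) (hq : q ∈ Set.Icc 0 1) (σ : Fin n → Bool)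
    (e : Finset (Fin n)) : edgeP p q σ e ∈ Set.Icc 0 1 := by
  unfold edgeP; split_ifs <;> assumption

lemma hypProb_nonneg (hp : p ∈ Set.Icc 0 1) (hq : q ∈ Set.Icc 0 1) (σ : Fin n → Bool)
    (E : KSet n k → Bool) : 0 ≤ hypProb p q σ E := by
  refine prod_nonneg fun e _ => ?_
  obtain ⟨h0, h1⟩ := edgeP_mem_Icc hp hq σ e.1
  split_ifs <;> linarith

lemma hypProb_negB (σ : Fin n → Bool) (E : KSet n k → Bool) :
    hypProb p q (negB σ) E = hypProb p q σ E := by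
  simp only [hypProb, edgeP, inCluster_negB]

lemma bhattacharyya_edgeP (hp : p ∈ Set.Icc 0 1) (hq : q ∈ Set.Icc 0 1) (σ τ : Fin n → Bool)
    (e : Finset (Fin n)) : bhattacharyya (edgeP p q σ e) (edgeP p q τ e) =
      if ¬(inCluster σ e ↔ inCluster τ e) then bhattacharyya p q else 1 := by
  unfold edgeP
  split_ifs <;> first | tauto | simp only [bhattacharyya_self, bhattacharyya_comm, *]

lemma sum_sqrt_hypProb_mul_hypProb (hp : p ∈ Set.Icc 0 1) (hq : q ∈ Set.Icc 0 1)
    (σ τ : Fin n → Bool) :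
    ∑ E : KSet n k → Bool, √(hypProb p q σ E * hypProb p q τ E) =
      bhattacharyya p q ^ #(separating k σ τ) := by
  unfold hypProb
  rw [sum_sqrt_prod_bernoulli (fun e : KSet n k => edgeP_mem_Icc hp hq σ e.1)
    fun e => edgeP_mem_Icc hp hq τ e.1]
  simp only [bhattacharyya_edgeP hp hq]
  rw [← prod_filter, prod_const, separating]

lemma prEvent_nonneg (hp : p ∈ Set.Icc 0 1) (hq : q ∈ Set.Icc 0 1)
    (P : (Fin n → Bool) → (KSet n k → Bool) → Prop) : 0 ≤ prEvent n k p q P := by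
  refine sum_nonneg fun σ _ => sum_nonneg fun E _ => ?_
  have hσ : 0 ≤ sigProb n σ := by unfold sigProb; positivity
  have hE := hypProb_nonneg hp hq σ E
  positivity

lemma prEvent_le_of_forall_balanced {P : (Fin n → Bool) → (KSet n k → Bool) → Prop} {B : ℝ}
    (hB : 0 ≤ B)
    (h : ∀ σ, balanced σ → ∑ E, hypProb p q σ E * (if P σ E then 1 else 0) ≤ B) :
    prEvent n k p q P ≤ B := by
  set N : ℝ := (#{τ : Fin n → Bool | balanced τ} : ℝ)
  calc prEvent n k p q P
      = ∑ σ : Fin n → Bool, sigProb n σ * ∑ E, hypProb p q σ E * (if P σ E then 1 else 0) := by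
        simp only [prEvent, mul_sum, mul_assoc]
    _ ≤ ∑ σ : Fin n → Bool, if balanced σ then N⁻¹ * B else 0 := by
        refine sum_le_sum fun σ _ => ?_
        rw [sigProb, one_div]
        split_ifs with hσ
        · exact mul_le_mul_of_nonneg_left (h σ hσ) (by positivity)
        · rw [zero_mul]
    _ = N * N⁻¹ * B := by rw [← sum_filter, sum_const, nsmul_eq_mul, mul_assoc]
    _ ≤ B := mul_le_of_le_one_left hB mul_inv_le_one

end Likelihood

section UnionBound

variable {n m k : ℕ} {p q : ℝ}

/-- The event that an estimator recovers the hidden labelling neither exactly nor up to the global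
sign flip. -/
def Fails (est : (KSet n k → Bool) → (Fin n → Bool)) (σ : Fin n → Bool) (E : KSet n k → Bool) :
    Prop :=
  est E ≠ σ ∧ est E ≠ negB σ

/-- The failure probability `p_fail` of an estimator. -/
noncomputable def failProb (p q : ℝ) (est : (KSet n k → Bool) → (Fin n → Bool)) : ℝ :=
  prEvent n k p q (Fails est)

/-- The balanced labellings, other than `σ` itself, that agree with `σ` on at least half of its
`+1` cluster. A balanced labelling that is not among `σ`, `negB σ` is a competitor of `σ` or the
sign flip of one. -/
def competitors (σ : Fin n → Bool) : Finset (Fin n → Bool) :=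
  {τ | balanced τ ∧ 1 ≤ mismatch σ τ ∧ 2 * mismatch σ τ ≤ #(plusSet σ)}

lemma mem_competitors {σ τ : Fin n → Bool} : τ ∈ competitors σ ↔
    balanced τ ∧ 1 ≤ mismatch σ τ ∧ 2 * mismatch σ τ ≤ #(plusSet σ) := by
  simp only [competitors, mem_filter_univ]

lemma mem_competitors_or_negB_mem_competitors {σ τ : Fin n → Bool} (hσ : balanced σ)
    (hτ : balanced τ) (hne : τ ≠ σ) (hne_neg : τ ≠ negB σ) :
    τ ∈ competitors σ ∨ negB τ ∈ competitors σ := by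
  have hpos := mismatch_pos hσ hτ hne
  have hpos_neg : 0 < mismatch σ (negB τ) :=
    mismatch_pos hσ (balanced_negB hτ) fun h => hne_neg (by rw [← h, negB_negB])
  have hadd := card_plusSet_inter_add_mismatch σ τ
  rw [← mismatch_negB] at hadd
  rcases le_total (2 * mismatch σ τ) #(plusSet σ) with h | h
  · exact .inl (mem_competitors.2 ⟨hτ, hpos, h⟩)
  · exact .inr (mem_competitors.2 ⟨balanced_negB hτ, hpos_neg, by omega⟩)

lemma exists_competitor_hypProb_le {est : (KSet n k → Bool) → (Fin n → Bool)}
    (hest : isMLE p q est) {σ : Fin n → Bool} (hσ : balanced σ) {E : KSet n k → Bool}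
    (hfail : Fails est σ E) :
    ∃ τ ∈ competitors σ, hypProb p q σ E ≤ hypProb p q τ E := by
  obtain ⟨hbal, hmax⟩ := hest E
  rcases mem_competitors_or_negB_mem_competitors hσ hbal hfail.1 hfail.2 with h | h
  · exact ⟨est E, h, hmax σ hσ⟩
  · exact ⟨negB (est E), h, (hmax σ hσ).trans_eq (hypProb_negB _ _).symm⟩

-- If `τ` beats `σ` then `P ≤ √(P * Q)` for their likelihoods `P ≤ Q`; summing over all
-- hypergraphs and all possible winners gives the union bound.
lemma sum_hypProb_fail_le (hp : p ∈ Set.Icc 0 1) (hq : q ∈ Set.Icc 0 1)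
    {est : (KSet n k → Bool) → (Fin n → Bool)} (hest : isMLE p q est) {σ : Fin n → Bool}
    (hσ : balanced σ) :
    ∑ E, hypProb p q σ E * (if Fails est σ E then 1 else 0) ≤
      ∑ τ ∈ competitors σ, bhattacharyya p q ^ #(separating k σ τ) := by
  simp only [← sum_sqrt_hypProb_mul_hypProb hp hq]
  rw [sum_comm]
  refine sum_le_sum fun E _ => ?_
  split_ifs with hfail
  · obtain ⟨τ, hτ, hle⟩ := exists_competitor_hypProb_le hest hσ hfail
    have hnonneg := hypProb_nonneg hp hq σ E
    calc hypProb p q σ E * 1 ≤ √(hypProb p q σ E * hypProb p q τ E) := by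
          rw [mul_one]
          exact Real.le_sqrt_of_sq_le (by rw [sq]; gcongr)
      _ ≤ ∑ τ ∈ competitors σ, √(hypProb p q σ E * hypProb p q τ E) :=
          single_le_sum (f := fun τ => √(hypProb p q σ E * hypProb p q τ E))
            (fun _ _ => Real.sqrt_nonneg _) hτ
  · rw [mul_zero]
    exact sum_nonneg fun _ _ => Real.sqrt_nonneg _

lemma sum_competitors_le {σ : Fin (2 * m) → Bool} (hσ : balanced σ) {f : ℕ → ℝ}
    (hf : ∀ j, 0 ≤ f j) :
    ∑ τ ∈ competitors σ, f (mismatch σ τ) ≤ ∑ j ∈ Icc 1 (m / 2), (m.choose j : ℝ) ^ 2 * f j := by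
  have hmaps : ∀ τ ∈ competitors σ, mismatch σ τ ∈ Icc 1 (m / 2) := fun τ hτ => by
    obtain ⟨-, hpos, hle⟩ := mem_competitors.1 hτ
    rw [card_plusSet_of_balanced hσ] at hle
    exact mem_Icc.2 ⟨hpos, by omega⟩
  rw [← sum_fiberwise_of_maps_to hmaps]
  refine sum_le_sum fun j _ => ?_
  have hcard : #{τ ∈ competitors σ | mismatch σ τ = j} ≤ m.choose j ^ 2 := by
    refine (card_le_card fun τ hτ => ?_).trans (card_balanced_mismatch_eq_le hσ j)
    obtain ⟨hτ, hj⟩ := mem_filter.1 hτ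
    exact mem_filter.2 ⟨mem_univ τ, (mem_competitors.1 hτ).1, hj⟩
  calc ∑ τ ∈ competitors σ with mismatch σ τ = j, f (mismatch σ τ)
      = #{τ ∈ competitors σ | mismatch σ τ = j} * f j := by
        rw [sum_congr rfl fun τ hτ => congrArg f (mem_filter.1 hτ).2, sum_const, nsmul_eq_mul]
    _ ≤ (m.choose j : ℝ) ^ 2 * f j :=
        mul_le_mul_of_nonneg_right (mod_cast hcard) (hf j)

lemma bhattacharyya_pow_card_separating_le (hk : k ≠ 0) (hp : p ∈ Set.Icc 0 1)
    (hq : q ∈ Set.Icc 0 1) {σ τ : Fin (2 * m) → Bool} (hσ : balanced σ) (hτ : balanced τ) :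
    bhattacharyya p q ^ #(separating k σ τ) ≤
      Real.exp (-(2 * (√p - √q) ^ 2) * splitCount m k (mismatch σ τ)) := by
  calc bhattacharyya p q ^ #(separating k σ τ)
      ≤ Real.exp (-((√p - √q) ^ 2 / 2)) ^ #(separating k σ τ) :=
        pow_le_pow_left₀ (bhattacharyya_nonneg p q) (bhattacharyya_le_exp hp hq) _
    _ = Real.exp (-((√p - √q) ^ 2 / 2 * #(separating k σ τ))) := by
        rw [← Real.exp_nat_mul]; ring_nf
    _ ≤ Real.exp (-((√p - √q) ^ 2 / 2 * (4 * splitCount m k (mismatch σ τ)))) := by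
        gcongr; exact four_mul_splitCount_le_card_separating hk hσ hτ
    _ = Real.exp (-(2 * (√p - √q) ^ 2) * splitCount m k (mismatch σ τ)) := by ring_nf

theorem failProb_le (hk : k ≠ 0) (hp : p ∈ Set.Icc 0 1) (hq : q ∈ Set.Icc 0 1)
    {est : (KSet (2 * m) k → Bool) → (Fin (2 * m) → Bool)} (hest : isMLE p q est) :
    failProb p q est ≤ ∑ j ∈ Icc 1 (m / 2),
      (m.choose j : ℝ) ^ 2 * Real.exp (-(2 * (√p - √q) ^ 2) * splitCount m k j) := by
  refine prEvent_le_of_forall_balanced (sum_nonneg fun j _ => by positivity) fun σ hσ => ?_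
  refine (sum_hypProb_fail_le hp hq hest hσ).trans ?_
  refine (sum_le_sum fun τ hτ => ?_).trans (sum_competitors_le hσ fun j => (Real.exp_pos _).le)
  exact bhattacharyya_pow_card_separating_le hk hp hq hσ (mem_competitors.1 hτ).1

end UnionBound

section SplitCount

variable {m r j : ℕ}

lemma mul_choose_add_choose_succ_le (a r j : ℕ) :
    j * a.choose r + a.choose (r + 1) ≤ (a + j).choose (r + 1) := by
  induction j with
  | zero => simp
  | succ j ih =>
    have := Nat.choose_le_choose r (Nat.le_add_right a j)
    rw [← add_assoc, Nat.choose_succ_succ]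
    linarith

lemma choose_succ_le_mul_choose_div (j r : ℕ) :
    (j.choose (r + 1) : ℝ) ≤ j * (j.choose r / (r + 1)) := by
  have h : j.choose (r + 1) * (r + 1) ≤ j * j.choose r := by
    rw [Nat.choose_succ_right_eq, mul_comm]
    exact Nat.mul_le_mul_right _ (Nat.sub_le _ _)
  rw [mul_div_assoc', le_div_iff₀ (by positivity)]
  exact_mod_cast h

lemma mul_sub_le_splitCount (hj : j ≤ m) :
    j * ((m - j).choose r - j.choose r / (r + 1) : ℝ) ≤ splitCount m (r + 1) j := by
  have hcross : (j * (m - j).choose r + (m - j).choose (r + 1) : ℝ) ≤ m.choose (r + 1) := by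
    have := mul_choose_add_choose_succ_le (m - j) r j
    rw [Nat.sub_add_cancel hj] at this
    exact_mod_cast this
  have := choose_succ_le_mul_choose_div j r
  rw [splitCount]
  linarith

lemma pow_div_factorial_le_choose {a r : ℕ} {y : ℝ} (hy : 0 ≤ y) (h : y + r ≤ a) :
    y ^ r / r.factorial ≤ a.choose r := by
  refine le_trans ?_ (Nat.pow_le_choose r a)
  have hra : r ≤ a + 1 := by exact_mod_cast (by linarith : (r : ℝ) ≤ a + 1)
  have : y ≤ (a + 1 - r : ℕ) := by
    rw [Nat.cast_sub hra]; push_cast; linarith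
  gcongr

lemma choose_two_mul_sub_one_le (m r : ℕ) :
    ((2 * m - 1).choose r : ℝ) ≤ 2 ^ r * (m ^ r / r.factorial) := by
  calc ((2 * m - 1).choose r : ℝ) ≤ ((2 * m).choose r : ℕ) :=
        mod_cast Nat.choose_le_choose r (Nat.sub_le _ _)
    _ ≤ ((2 * m : ℕ) : ℝ) ^ r / r.factorial := Nat.choose_le_pow_div r (2 * m)
    _ = 2 ^ r * (m ^ r / r.factorial) := by push_cast; ring

lemma le_splitCount_of_le_half (hr : r ≠ 0) (hrm : 4 * r ≤ m) (hj : 2 * j ≤ m) :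
    1 / (2 * 8 ^ r) * j * (2 * m - 1).choose r ≤ splitCount m (r + 1) j := by
  have hjm : j ≤ m := by omega
  have hdenom : (2 : ℝ) ≤ r + 1 := by exact_mod_cast (by omega : 2 ≤ r + 1)
  have hchoose : (j.choose r / (r + 1) : ℝ) ≤ (m - j).choose r / 2 := by
    have := Nat.choose_le_choose r (by omega : j ≤ m - j)
    gcongr
  have hquarter : ((m : ℝ) / 4) ^ r / r.factorial ≤ (m - j).choose r := by
    refine pow_div_factorial_le_choose (by positivity) ?_
    have : (4 * r : ℝ) ≤ m := mod_cast hrm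
    have : (2 * j : ℝ) ≤ m := mod_cast hj
    rw [Nat.cast_sub hjm]
    linarith
  calc 1 / (2 * 8 ^ r) * j * (2 * m - 1).choose r
      ≤ 1 / (2 * 8 ^ r) * j * (2 ^ r * (m ^ r / r.factorial) : ℝ) := by
        gcongr; exact choose_two_mul_sub_one_le m r
    _ = j * (((m : ℝ) / 4) ^ r / r.factorial / 2) := by
        rw [div_pow, show (8 : ℝ) = 2 * 4 by norm_num, mul_pow]
        field_simp
    _ ≤ j * ((m - j).choose r / 2) := by gcongr
    _ ≤ j * ((m - j).choose r - j.choose r / (r + 1)) := by gcongr; linarith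
    _ ≤ splitCount m (r + 1) j := mul_sub_le_splitCount hjm

lemma le_splitCount_of_le_mul {δ : ℝ} (hδ : 2 * δ ≤ 1) (hκ : 0 ≤ (1 - 2 * δ) ^ r - δ ^ r)
    (hrm : r ≤ δ * m) (hj : j ≤ δ * m) :
    ((1 - 2 * δ) ^ r - δ ^ r) / 2 ^ r * j * (2 * m - 1).choose r ≤ splitCount m (r + 1) j := by
  have hm : (0 : ℝ) ≤ m := m.cast_nonneg
  have hjm : j ≤ m := by exact_mod_cast (by nlinarith : (j : ℝ) ≤ m)
  have hlarge : ((1 - 2 * δ) * m) ^ r / r.factorial ≤ (m - j).choose r := by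
    refine pow_div_factorial_le_choose (mul_nonneg (by linarith) hm) ?_
    rw [Nat.cast_sub hjm]
    linarith
  have hsmall : (j.choose r / (r + 1) : ℝ) ≤ (δ * m) ^ r / r.factorial := by
    calc (j.choose r / (r + 1) : ℝ) ≤ j.choose r := div_le_self (by positivity) (by simp)
      _ ≤ (j : ℝ) ^ r / r.factorial := Nat.choose_le_pow_div r j
      _ ≤ (δ * m) ^ r / r.factorial := by gcongr
  calc ((1 - 2 * δ) ^ r - δ ^ r) / 2 ^ r * j * (2 * m - 1).choose r
      ≤ ((1 - 2 * δ) ^ r - δ ^ r) / 2 ^ r * j * (2 ^ r * (m ^ r / r.factorial)) := by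
        gcongr; exact choose_two_mul_sub_one_le m r
    _ = j * (((1 - 2 * δ) * m) ^ r / r.factorial - (δ * m) ^ r / r.factorial) := by
        rw [mul_pow, mul_pow]; field_simp
    _ ≤ j * ((m - j).choose r - j.choose r / (r + 1)) := by gcongr
    _ ≤ splitCount m (r + 1) j := mul_sub_le_splitCount hjm

lemma exists_forall_le_splitCount (hr : r ≠ 0) {κ : ℝ} (hκ0 : 0 ≤ κ) (hκ1 : κ < 1) :
    ∃ δ > (0 : ℝ), ∀ᶠ m : ℕ in atTop, ∀ j : ℕ, j ≤ δ * m →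
      κ / 2 ^ r * j * (2 * m - 1).choose r ≤ splitCount m (r + 1) j := by
  have hlim : Tendsto (fun δ : ℝ => (1 - 2 * δ) ^ r - δ ^ r) (nhdsWithin 0 (Set.Ioi 0)) (nhds 1) :=
    ((by fun_prop : Continuous fun δ : ℝ => (1 - 2 * δ) ^ r - δ ^ r).tendsto' 0 1
      (by simp [hr])).mono_left nhdsWithin_le_nhds
  obtain ⟨δ, hκδ, hδ0, hδ⟩ := ((hlim.eventually_const_le hκ1).and
    (Ioo_mem_nhdsGT (one_half_pos (α := ℝ)))).exists
  have hrm := (tendsto_natCast_atTop_atTop.const_mul_atTop hδ0).eventually_ge_atTop (r : ℝ)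
  refine ⟨δ, hδ0, hrm.mono fun m hrm j hj => le_trans ?_
    (le_splitCount_of_le_mul (by linarith) (hκ0.trans hκδ) hrm hj)⟩
  gcongr

end SplitCount

section UnionTerm

variable {G s : ℝ} {r : ℕ}

lemma tendsto_two_mul_natCast : Tendsto (fun m : ℕ => ((2 * m : ℕ) : ℝ)) atTop atTop :=
  tendsto_natCast_atTop_atTop.comp (tendsto_id.const_mul_atTop' two_pos)

lemma tendsto_log_two_mul : Tendsto (fun m : ℕ => Real.log (2 * m : ℕ)) atTop atTop :=
  Real.tendsto_log_atTop.comp tendsto_two_mul_natCast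

/-- The contribution to the union bound of the labellings at mismatch `j`, on `2 * m` vertices and
for `(r + 1)`-uniform hypergraphs. The parameter `G` stands for `(√α - √β) ^ 2`. -/
noncomputable def unionTerm (G : ℝ) (r m j : ℕ) : ℝ :=
  (m.choose j : ℝ) ^ 2 * Real.exp
    (-(2 * (G * Real.log (2 * m : ℕ) / (2 * m - 1).choose r)) * splitCount m (r + 1) j)

lemma unionTerm_le_of_le_splitCount {m j : ℕ} {c : ℝ} (hG : 0 ≤ G) (hrm : r ≤ 2 * m - 1)
    (h : c * j * (2 * m - 1).choose r ≤ splitCount m (r + 1) j) :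
    unionTerm G r m j ≤
      (m.choose j : ℝ) ^ 2 * Real.exp (-(2 * (G * c) * Real.log (2 * m : ℕ) * j)) := by
  have hN : (0 : ℝ) < (2 * m - 1).choose r := mod_cast Nat.choose_pos hrm
  have := Real.log_natCast_nonneg (2 * m)
  unfold unionTerm
  gcongr
  calc -(2 * (G * Real.log (2 * m : ℕ) / (2 * m - 1).choose r)) * splitCount m (r + 1) j
      ≤ -(2 * (G * Real.log (2 * m : ℕ) / (2 * m - 1).choose r)) *
          (c * j * (2 * m - 1).choose r) :=
        mul_le_mul_of_nonpos_left h (neg_nonpos.2 (by positivity))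
    _ = -(2 * (G * c) * Real.log (2 * m : ℕ) * j) := by field_simp

lemma exists_forall_unionTerm_le_pow (hr : r ≠ 0) (hs0 : 0 ≤ s) (hs : s < 2 * (G / 2 ^ r - 1)) :
    ∃ δ > (0 : ℝ), ∀ᶠ m : ℕ in atTop, ∀ j : ℕ, j ≤ δ * m →
      unionTerm G r m j ≤ (((2 * m : ℕ) : ℝ) ^ (-s)) ^ j := by
  have hI : 0 < G / 2 ^ r := by linarith
  have hG : 0 < G := (div_pos_iff_of_pos_right (by positivity)).1 hI
  obtain ⟨δ, hδ, hsplit⟩ := exists_forall_le_splitCount hr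
    (κ := (s + 2) / (2 * (G / 2 ^ r))) (by positivity) (by rw [div_lt_one] <;> linarith)
  refine ⟨δ, hδ, ?_⟩
  filter_upwards [hsplit, eventually_ge_atTop (r + 1)] with m hsplit hrm j hj
  have hm : (0 : ℝ) < (2 * m : ℕ) := by exact_mod_cast (by omega : 0 < 2 * m)
  set L := Real.log (2 * m : ℕ)
  have hchoose : (m.choose j : ℝ) ≤ Real.exp L ^ j := by
    calc (m.choose j : ℝ) ≤ (m : ℝ) ^ j := mod_cast Nat.choose_le_pow m j
      _ ≤ ((2 * m : ℕ) : ℝ) ^ j := by gcongr; omega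
      _ = Real.exp L ^ j := by rw [Real.exp_log hm]
  calc unionTerm G r m j
      ≤ (m.choose j : ℝ) ^ 2 * Real.exp
          (-(2 * (G * ((s + 2) / (2 * (G / 2 ^ r)) / 2 ^ r)) * L * j)) :=
        unionTerm_le_of_le_splitCount hG.le (by omega) (hsplit j hj)
    _ ≤ (Real.exp L ^ j) ^ 2 * Real.exp (-((s + 2) * L * j)) := by
        gcongr
        · exact le_of_eq (by field_simp)
    _ = (((2 * m : ℕ) : ℝ) ^ (-s)) ^ j := by
        rw [Real.rpow_def_of_pos hm]
        simp only [← Real.exp_nat_mul, ← Real.exp_add, Nat.cast_ofNat]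
        congr 1
        ring

lemma eventually_forall_unionTerm_le_rpow (hr : r ≠ 0) (hG : 0 < G) {δ : ℝ} (hδ : 0 < δ) (s : ℝ) :
    ∀ᶠ m : ℕ in atTop, ∀ j : ℕ, δ * m < j → 2 * j ≤ m →
      unionTerm G r m j ≤ ((2 * m : ℕ) : ℝ) ^ (-s) := by
  set c : ℝ := 1 / (2 * 8 ^ r)
  have hGc : 0 < G * c := by positivity
  filter_upwards [eventually_ge_atTop (4 * r),
    (tendsto_log_two_mul.const_mul_atTop hGc).eventually_ge_atTop (2 / δ),
    ((tendsto_natCast_atTop_atTop.const_mul_atTop hδ).const_mul_atTop hGc).eventually_ge_atTop s]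
    with m hrm hlog hlin j hδj hj
  have hm : (0 : ℝ) < (2 * m : ℕ) := by exact_mod_cast (by omega : 0 < 2 * m)
  set L := Real.log (2 * m : ℕ)
  have : 0 ≤ L := Real.log_natCast_nonneg _
  have hchoose : (m.choose j : ℝ) ≤ Real.exp (j / δ) := by
    calc (m.choose j : ℝ) ≤ 2 ^ m := mod_cast Nat.choose_le_two_pow m j
      _ ≤ Real.exp 1 ^ m := by gcongr; linarith [Real.add_one_le_exp (1 : ℝ)]
      _ = Real.exp m := by rw [← Real.exp_nat_mul, mul_one]
      _ ≤ Real.exp (j / δ) := Real.exp_le_exp.2 (by rw [le_div_iff₀ hδ]; linarith)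
  have hs : s * L ≤ G * c * L * j := by
    calc s * L ≤ G * c * (δ * m) * L := by gcongr
      _ ≤ G * c * j * L := by gcongr
      _ = G * c * L * j := by ring
  calc unionTerm G r m j ≤ (m.choose j : ℝ) ^ 2 * Real.exp (-(2 * (G * c) * L * j)) :=
        unionTerm_le_of_le_splitCount hG.le (by omega) (le_splitCount_of_le_half hr hrm hj)
    _ ≤ Real.exp (j / δ) ^ 2 * Real.exp (-(2 * (G * c) * L * j)) := by gcongr
    _ = Real.exp (2 / δ * j - 2 * (G * c * L * j)) := by
        rw [← Real.exp_nat_mul, ← Real.exp_add]; push_cast; ring_nf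
    _ ≤ Real.exp (-(s * L)) := by
        have : 2 / δ * j ≤ G * c * L * j := by gcongr
        exact Real.exp_le_exp.2 (by linarith)
    _ = ((2 * m : ℕ) : ℝ) ^ (-s) := by rw [Real.rpow_def_of_pos hm, mul_neg, mul_comm]

lemma sum_Icc_one_pow_le {x : ℝ} (hx0 : 0 ≤ x) (hx : x ≤ 1 / 2) (n : ℕ) :
    ∑ j ∈ Icc 1 n, x ^ j ≤ 2 * x := by
  have h := geom_sum_Ico_le_of_lt_one (m := 1) (n := n + 1) hx0 (by linarith)
  rw [pow_one] at h
  refine h.trans ?_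
  rw [div_le_iff₀ (by linarith)]
  nlinarith

lemma eventually_sum_unionTerm_le_three_mul (hr : r ≠ 0) (hs0 : 0 < s)
    (hs : s < 2 * (G / 2 ^ r - 1)) :
    ∀ᶠ m : ℕ in atTop,
      ∑ j ∈ Icc 1 (m / 2), unionTerm G r m j ≤ 3 * ((2 * m : ℕ) : ℝ) ^ (-s) := by
  have hG : 0 < G := (div_pos_iff_of_pos_right (by positivity)).1 (by linarith : 0 < G / 2 ^ r)
  obtain ⟨δ, hδ, hsmall⟩ := exists_forall_unionTerm_le_pow hr hs0.le hs
  filter_upwards [hsmall, eventually_forall_unionTerm_le_rpow hr hG hδ (s + 1),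
    ((tendsto_rpow_neg_atTop hs0).comp tendsto_two_mul_natCast).eventually_le_const one_half_pos,
    eventually_gt_atTop 0] with m hsmall hlarge hhalf hm
  have hn : (0 : ℝ) < (2 * m : ℕ) := mod_cast Nat.mul_pos two_pos hm
  set x := ((2 * m : ℕ) : ℝ) ^ (-s)
  have hx0 : 0 ≤ x := by positivity
  have hterm : ∀ j ∈ Icc 1 (m / 2), unionTerm G r m j ≤ x ^ j + ((2 * m : ℕ) : ℝ) ^ (-(s + 1)) := by
    intro j hj
    rcases le_or_gt (j : ℝ) (δ * m) with h | h
    · exact (hsmall j h).trans (le_add_of_nonneg_right (by positivity))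
    · have := (mem_Icc.1 hj).2
      exact (hlarge j h (by omega)).trans (le_add_of_nonneg_left (by positivity))
  have hcard : (#(Icc 1 (m / 2)) : ℝ) ≤ (2 * m : ℕ) := by
    rw [Nat.card_Icc]; exact_mod_cast (by omega : m / 2 + 1 - 1 ≤ 2 * m)
  calc ∑ j ∈ Icc 1 (m / 2), unionTerm G r m j
      ≤ ∑ j ∈ Icc 1 (m / 2), x ^ j + #(Icc 1 (m / 2)) * ((2 * m : ℕ) : ℝ) ^ (-(s + 1)) := by
        rw [← nsmul_eq_mul, ← sum_const, ← sum_add_distrib]; exact sum_le_sum hterm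
    _ ≤ 2 * x + (2 * m : ℕ) * ((2 * m : ℕ) : ℝ) ^ (-(s + 1)) := by
        gcongr; exact sum_Icc_one_pow_le hx0 hhalf _
    _ = 2 * x + x := by
        rw [mul_comm ((2 * m : ℕ) : ℝ), ← Real.rpow_add_one hn.ne', neg_add,
          neg_add_cancel_right]
    _ = 3 * x := by ring

lemma eventually_sum_unionTerm_le_rpow (hr : r ≠ 0) {c : ℝ} (hc0 : 0 ≤ c)
    (hc : c < 2 * (G / 2 ^ r - 1)) :
    ∀ᶠ m : ℕ in atTop, ∑ j ∈ Icc 1 (m / 2), unionTerm G r m j ≤ ((2 * m : ℕ) : ℝ) ^ (-c) := by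
  obtain ⟨s, hcs, hs⟩ := exists_between hc
  filter_upwards [eventually_sum_unionTerm_le_three_mul hr (hc0.trans_lt hcs) hs,
    ((tendsto_rpow_atTop (sub_pos.2 hcs)).comp tendsto_two_mul_natCast).eventually_ge_atTop 3,
    eventually_gt_atTop 0] with m hsum hthree hm
  have hn : (0 : ℝ) < (2 * m : ℕ) := mod_cast Nat.mul_pos two_pos hm
  calc ∑ j ∈ Icc 1 (m / 2), unionTerm G r m j ≤ 3 * ((2 * m : ℕ) : ℝ) ^ (-s) := hsum
    _ ≤ ((2 * m : ℕ) : ℝ) ^ (s - c) * ((2 * m : ℕ) : ℝ) ^ (-s) := by gcongr; exact hthree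
    _ = ((2 * m : ℕ) : ℝ) ^ (-c) := by rw [← Real.rpow_add hn]; ring_nf

end UnionTerm

section Rate

variable {k : ℕ} {α β : ℝ}

lemma pParam_nonneg (hα : 0 ≤ α) (k n : ℕ) : 0 ≤ pParam k α n := by
  unfold pParam
  have := Real.log_natCast_nonneg n
  positivity

lemma tendsto_pParam (hk : 2 ≤ k) (α : ℝ) : Tendsto (pParam k α) atTop (nhds 0) := by
  rw [← tendsto_add_atTop_iff_nat 1]
  have hsucc : (fun n : ℕ => ((n + 1 : ℕ) : ℝ)) =O[atTop] fun n : ℕ => (n : ℝ) :=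
    Asymptotics.IsBigO.of_bound 2 <| (eventually_ge_atTop 1).mono fun n hn => by
      simp only [Real.norm_natCast]
      exact_mod_cast (by omega : n + 1 ≤ 2 * n)
  have hlog : (fun n : ℕ => Real.log (n + 1 : ℕ)) =o[atTop] fun n : ℕ => (n : ℝ) :=
    (Real.isLittleO_log_id_atTop.comp_tendsto
      (tendsto_natCast_atTop_atTop.comp (tendsto_add_atTop_nat 1))).trans_isBigO hsucc
  have hpow : (fun n : ℕ => (n : ℝ)) =O[atTop] fun n : ℕ => (n : ℝ) ^ (k - 1) :=
    Asymptotics.IsBigO.of_norm_le fun n => by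
      rw [Real.norm_natCast]
      exact_mod_cast Nat.le_self_pow (by omega) n
  have hchoose : (fun n : ℕ => (n : ℝ)) =O[atTop] fun n : ℕ => (n.choose (k - 1) : ℝ) :=
    hpow.trans (isTheta_choose (k - 1)).2
  have := (hlog.trans_isBigO hchoose).tendsto_div_nhds_zero.const_mul α
  simpa [pParam, mul_div_assoc] using this

lemma eventually_pParam_mem_Icc (hk : 2 ≤ k) (hα : 0 ≤ α) :
    ∀ᶠ m : ℕ in atTop, pParam k α (2 * m) ∈ Set.Icc 0 1 := by
  have h := (tendsto_pParam hk α).comp (tendsto_id.const_mul_atTop' two_pos)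
  exact (h.eventually_le_const one_pos).mono fun m hm => ⟨pParam_nonneg hα k _, hm⟩

lemma sq_sqrt_pParam_sub_sqrt_pParam (hα : 0 ≤ α) (hβ : 0 ≤ β) (k n : ℕ) :
    (√(pParam k α n) - √(pParam k β n)) ^ 2 =
      (√α - √β) ^ 2 * Real.log n / (n - 1).choose (k - 1) := by
  have := Real.log_natCast_nonneg n
  rw [pParam, pParam, mul_div_assoc, mul_div_assoc, Real.sqrt_mul hα, Real.sqrt_mul hβ, ← sub_mul,
    mul_pow, Real.sq_sqrt (by positivity), mul_div_assoc]

theorem eventually_failProb_le_rpow (hk : 2 ≤ k) (hα : 0 ≤ α) (hβ : 0 ≤ β) {c : ℝ} (hc0 : 0 ≤ c)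
    (hc : c < 2 * ((√α - √β) ^ 2 / 2 ^ (k - 1) - 1))
    {est : (m : ℕ) → (KSet (2 * m) k → Bool) → (Fin (2 * m) → Bool)}
    (hest : ∀ m, isMLE (pParam k α (2 * m)) (pParam k β (2 * m)) (est m)) :
    ∀ᶠ m : ℕ in atTop,
      failProb (pParam k α (2 * m)) (pParam k β (2 * m)) (est m) ≤ ((2 * m : ℕ) : ℝ) ^ (-c) := by
  obtain ⟨r, rfl⟩ : ∃ r, k = r + 1 := ⟨k - 1, by omega⟩
  filter_upwards [eventually_pParam_mem_Icc hk hα, eventually_pParam_mem_Icc hk hβ,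
    eventually_sum_unionTerm_le_rpow (by omega) hc0 hc] with m hp hq hsum
  refine (failProb_le (by omega) hp hq (hest m)).trans (le_of_eq_of_le ?_ hsum)
  simp only [unionTerm, sq_sqrt_pParam_sub_sqrt_pParam hα hβ, Nat.add_sub_cancel]

lemma exists_tendsto_forall_of_eventually {ι X : Type*} [TopologicalSpace X] {l : Filter ι}
    {P : ι → X → Prop} {x : X} (hx : ∀ᶠ i in l, P i x) (h : ∀ i, ∃ y, P i y) :
    ∃ f : ι → X, Tendsto f l (nhds x) ∧ ∀ i, P i (f i) := by
  choose g hg using h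
  refine ⟨fun i => if P i x then x else g i, tendsto_const_nhds.congr' ?_, fun i => ?_⟩
  · exact hx.mono fun i hi => (if_pos hi).symm
  · dsimp only
    split_ifs with hi
    exacts [hi, hg i]

lemma failProb_zero {p q : ℝ} (est : (KSet 0 k → Bool) → (Fin 0 → Bool)) :
    failProb p q est = 0 := by
  unfold failProb prEvent
  refine sum_eq_zero fun σ _ => sum_eq_zero fun E _ => ?_
  rw [if_neg fun h : Fails est σ E => h.1 (Subsingleton.elim _ _), mul_zero]

lemma exists_failProb_le_rpow {m : ℕ} {p q : ℝ} (a : ℝ)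
    (est : (KSet (2 * m) k → Bool) → (Fin (2 * m) → Bool)) :
    ∃ y, failProb p q est ≤ ((2 * m : ℕ) : ℝ) ^ (a + y) := by
  rcases m.eq_zero_or_pos with rfl | hm
  · exact ⟨0, (failProb_zero est).trans_le (by positivity)⟩
  · have hn : (1 : ℝ) < (2 * m : ℕ) := by exact_mod_cast (by omega : 1 < 2 * m)
    exact ((tendsto_rpow_atTop_of_base_gt_one _ hn).comp
      (tendsto_atTop_add_const_left _ a tendsto_id)).eventually_ge_atTop _ |>.exists

end Rate

end HSBM

/-- If `I(α,β) > 1` then the failure probability of the ML estimator satisfies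
`p_fail ≤ n^{-(I(α,β)-1)/2 + o(1)}`; in particular `p_fail = o(1)`. -/
theorem mle_succeeds_above_threshold (k : ℕ) (hk : 2 ≤ k) (α β : ℝ) (hα : 0 < α) (hβ : 0 < β)
    (hI : 1 < (Real.sqrt α - Real.sqrt β) ^ 2 / 2 ^ (k - 1)) :
    ∀ est : (m : ℕ) → (KSet (2 * m) k → Bool) → (Fin (2 * m) → Bool),
      (∀ m : ℕ, isMLE (pParam k α (2 * m)) (pParam k β (2 * m)) (est m)) →
      ∃ ε : ℕ → ℝ, Tendsto ε atTop (nhds 0) ∧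
        (∀ m : ℕ,
          prEvent (2 * m) k (pParam k α (2 * m)) (pParam k β (2 * m))
              (fun σ E => est m E ≠ σ ∧ est m E ≠ negB σ)
            ≤ ((2 * m : ℕ) : ℝ) ^
                (-(((Real.sqrt α - Real.sqrt β) ^ 2 / 2 ^ (k - 1)) - 1) / 2 + ε m)) ∧
        Tendsto (fun m : ℕ =>
            prEvent (2 * m) k (pParam k α (2 * m)) (pParam k β (2 * m))
              (fun σ E => est m E ≠ σ ∧ est m E ≠ negB σ))
          atTop (nhds 0) := by
  intro est hest
  have hrate := HSBM.eventually_failProb_le_rpow hk hα.le hβ.le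
    (c := ((√α - √β) ^ 2 / 2 ^ (k - 1) - 1) / 2) (by linarith) (by linarith) hest
  obtain ⟨ε, hε, hle⟩ := HSBM.exists_tendsto_forall_of_eventually (x := (0 : ℝ))
    (by simpa only [add_zero, neg_div] using hrate)
    fun m => HSBM.exists_failProb_le_rpow (-((√α - √β) ^ 2 / 2 ^ (k - 1) - 1) / 2) (est m)
  refine ⟨ε, hε, hle, squeeze_zero' ?_ hrate ?_⟩
  · filter_upwards [HSBM.eventually_pParam_mem_Icc hk hα.le,
      HSBM.eventually_pParam_mem_Icc hk hβ.le] with m hp hq using HSBM.prEvent_nonneg hp hq _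
  · exact (tendsto_rpow_neg_atTop (by linarith)).comp HSBM.tendsto_two_mul_natCast
end
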